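/- arXiv:1806.04645 — 13 statements merged into one kernel-verified Lean document; each statement's English description precedes it below -/
import Mathlib

section
/- For all m, n ≥ 1 there exist languages P and T over the two-letter alphabet Σ = {a, b} such that P is accepted by a DFA with m states, T is accepted by a DFA with n states, and every DFA accepting (P·Σ*) ∩ T has at least m·n states. -/
/-!
The witnesses are `P`, the words with at least `m - 1` letters `0`, and `T`, the words whose number
of letters `1` is divisible by `n`. A counter saturating at `m - 1` accepts `P`, a cyclic counter
modulo `n` accepts `T`, and `P · Σ* = P` because appending letters cannot lower a count.
The `m * n` words `0^i 1^j` with `i < m`, `j < n` are pairwise Myhill–Nerode inequivalent for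
`P ∩ T`: the suffix `0^(m-1-i) 1^(n-j)` completes `0^i 1^j` to a word of the language, and
completes `0^i' 1^j'` only if `i ≤ i'` and `j = j'`. Hence these words reach distinct states of any
DFA for the language (`le_and_eq_of_eval_eq`, applied in both directions).
-/

open Language

/-- `L` is accepted by some DFA with exactly `k` states. -/
def AcceptedByDFAWith {α : Type} (L : Language α) (k : ℕ) : Prop :=
  ∃ M : DFA α (Fin k), M.accepts = L

/-- The words over `{0, 1}` with at least `k` letters `0`. -/
def atLeastZeros (k : ℕ) : Language (Fin 2) := {w | k ≤ w.count 0}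

/-- The words over `{0, 1}` whose number of letters `1` is a multiple of `n`. -/
def onesDvd (n : ℕ) : Language (Fin 2) := {w | n ∣ w.count 1}

lemma mem_atLeastZeros {k : ℕ} {w : List (Fin 2)} : w ∈ atLeastZeros k ↔ k ≤ w.count 0 := Iff.rfl

lemma mem_onesDvd {n : ℕ} {w : List (Fin 2)} : w ∈ onesDvd n ↔ n ∣ w.count 1 := Iff.rfl

/-- The automaton counting letters `0`, saturating at `k`. -/
def satDFA (k : ℕ) : DFA (Fin 2) (Fin (k + 1)) where
  step s c := if c = 0 then ⟨min (s + 1) k, by omega⟩ else s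
  start := 0
  accept := {s | s.val = k}

/-- The automaton counting letters `1` modulo `k + 1`. -/
def modDFA (k : ℕ) : DFA (Fin 2) (Fin (k + 1)) where
  step s c := if c = 1 then ⟨(s + 1) % (k + 1), Nat.mod_lt _ (by omega)⟩ else s
  start := 0
  accept := {s | s.val = 0}

lemma satDFA_eval (k : ℕ) (w : List (Fin 2)) :
    ((satDFA k).eval w).val = min (w.count 0) k := by
  induction w using List.reverseRecOn with
  | nil => simp [satDFA]
  | append_singleton w c ih =>
    rw [DFA.eval_append_singleton]
    by_cases hc : c = 0
    · have : (satDFA k).step ((satDFA k).eval w) c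
          = ⟨min (((satDFA k).eval w).val + 1) k, by omega⟩ := if_pos hc
      rw [this]
      simp [hc, ih]
      omega
    · have : (satDFA k).step ((satDFA k).eval w) c = (satDFA k).eval w := if_neg hc
      rw [this, ih]
      simp [hc]

lemma modDFA_eval (k : ℕ) (w : List (Fin 2)) :
    ((modDFA k).eval w).val = w.count 1 % (k + 1) := by
  induction w using List.reverseRecOn with
  | nil => simp [modDFA]
  | append_singleton w c ih =>
    rw [DFA.eval_append_singleton]
    by_cases hc : c = 1
    · have : (modDFA k).step ((modDFA k).eval w) c
          = ⟨(((modDFA k).eval w).val + 1) % (k + 1), Nat.mod_lt _ (by omega)⟩ := if_pos hc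
      rw [this]
      simp [hc, ih]
    · have : (modDFA k).step ((modDFA k).eval w) c = (modDFA k).eval w := if_neg hc
      rw [this, ih]
      simp [hc]

lemma acceptedBy_atLeastZeros (k : ℕ) : AcceptedByDFAWith (atLeastZeros k) (k + 1) := by
  refine ⟨satDFA k, ?_⟩
  ext w
  rw [DFA.mem_accepts, mem_atLeastZeros]
  change ((satDFA k).eval w).val = k ↔ _
  rw [satDFA_eval]
  omega

lemma acceptedBy_onesDvd (k : ℕ) : AcceptedByDFAWith (onesDvd (k + 1)) (k + 1) := by
  refine ⟨modDFA k, ?_⟩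
  ext w
  rw [DFA.mem_accepts, mem_onesDvd]
  change ((modDFA k).eval w).val = 0 ↔ _
  rw [modDFA_eval, Nat.dvd_iff_mod_eq_zero]

lemma atLeastZeros_mul_top (k : ℕ) :
    atLeastZeros k * (⊤ : Language (Fin 2)) = atLeastZeros k := by
  ext w
  rw [Language.mem_mul]
  constructor
  · rintro ⟨u, hu, v, -, rfl⟩
    rw [mem_atLeastZeros] at hu ⊢
    rw [List.count_append]
    omega
  · intro hw
    exact ⟨w, hw, [], trivial, List.append_nil w⟩

/-- If `0^i 1^j` and `0^i' 1^j'` reach the same state of a DFA for the language, then the suffix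
`0^(k-i) 1^(n-j)`, accepted after the former, is accepted after the latter. -/
lemma le_and_eq_of_eval_eq {k n : ℕ} {σ : Type} (D : DFA (Fin 2) σ)
    (hD : D.accepts = atLeastZeros k ⊓ onesDvd n) {i i' j j' : ℕ}
    (hi : i ≤ k) (hj : j < n) (hj' : j' < n)
    (h : D.eval (List.replicate i 0 ++ List.replicate j 1)
      = D.eval (List.replicate i' 0 ++ List.replicate j' 1)) :
    i ≤ i' ∧ j = j' := by
  have key : ∀ p q : ℕ,
      ((List.replicate p 0 ++ List.replicate q 1) ++
        (List.replicate (k - i) 0 ++ List.replicate (n - j) 1) : List (Fin 2)) ∈ D.accepts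
      ↔ k ≤ p + (k - i) ∧ n ∣ q + (n - j) := by
    intro p q
    rw [hD]
    change (_ ≤ List.count _ _ ∧ _ ∣ List.count _ _) ↔ _
    simp [List.count_append, List.count_replicate]
  have h1 := (key i j).2 ⟨by omega, by rw [Nat.add_sub_of_le hj.le]⟩
  rw [DFA.mem_accepts, DFA.eval, DFA.evalFrom_of_append] at h1
  change D.evalFrom (D.eval _) _ ∈ _ at h1
  rw [h] at h1
  have h2 := (key i' j').1 (by
    rw [DFA.mem_accepts, DFA.eval, DFA.evalFrom_of_append]
    exact h1)
  refine ⟨by omega, ?_⟩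
  -- `0 < j' + (n - j) < 2 * n`, so the only possible multiple of `n` is `n` itself.
  obtain ⟨c, hc⟩ := h2.2
  have hc1 : c = 1 := by
    rcases c with _ | _ | c
    · omega
    · rfl
    · nlinarith [Nat.zero_le (n * c), Nat.sub_le n j]
  subst hc1
  omega

/-- Tightness of the `m·n` bound for prefix matching over a binary alphabet. -/
theorem prefix_matching_lower (m n : ℕ) (hm : 1 ≤ m) (hn : 1 ≤ n) :
    ∃ P T : Language (Fin 2),
      AcceptedByDFAWith P m ∧ AcceptedByDFAWith T n ∧
      ∀ (σ : Type) [Fintype σ] (D : DFA (Fin 2) σ),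
        D.accepts = (P * (⊤ : Language (Fin 2))) ⊓ T → m * n ≤ Fintype.card σ := by
  obtain ⟨k, rfl⟩ := Nat.exists_eq_add_of_le' hm
  obtain ⟨l, rfl⟩ := Nat.exists_eq_add_of_le' hn
  refine ⟨atLeastZeros k, onesDvd (l + 1), acceptedBy_atLeastZeros k, acceptedBy_onesDvd l, ?_⟩
  intro σ _ D hD
  rw [atLeastZeros_mul_top] at hD
  have hinj : Function.Injective (fun p : Fin (k + 1) × Fin (l + 1) =>
      D.eval (List.replicate p.1.val 0 ++ List.replicate p.2.val 1)) := by
    rintro ⟨i, j⟩ ⟨i', j'⟩ h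
    have h1 := le_and_eq_of_eval_eq D hD (Nat.lt_succ_iff.1 i.2) j.2 j'.2 h
    have h2 := le_and_eq_of_eval_eq D hD (Nat.lt_succ_iff.1 i'.2) j'.2 j.2 h.symm
    exact Prod.ext (Fin.ext (le_antisymm h1.1 h2.1)) (Fin.ext h1.2)
  simpa using Fintype.card_le_of_injective _ hinj
end

section
/- Let Σ be any alphabet and let m, n ≥ 2. If P and T are languages over Σ such that P is accepted by some DFA with m states and T is accepted by some DFA with n states, then the language (Σ*·P) ∩ T is accepted by some DFA with 2^(m−1)·n states. -/
/-!
In the subset construction for `Σ*·P`, the initial state of the DFA for `P` belongs to every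
reachable subset, since the matched suffix may be empty. It therefore need not be recorded: subsets
of the other `m - 1` states suffice, giving `2 ^ (m - 1)` states (`suffixDFA`,
`suffixDFA_accepts`). Intersecting with `T` is the product construction, which multiplies the
number of states by `n`.
-/

open Language

/-- The subset automaton for `Σ*·L(A)`. A state is a set of non-initial states of `A`; it stands
for that set together with `A.start`, which is always implicitly present. -/
def suffixDFA {α σ : Type} (A : DFA α σ) : DFA α (Set {q : σ // q ≠ A.start}) where
  step S a := {q | A.step A.start a = q ∨ ∃ p ∈ S, A.step p a = q}
  start := ∅
  accept := {S | A.start ∈ A.accept ∨ ∃ q ∈ S, (q : σ) ∈ A.accept}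

/-- The subset reached on `w` consists of the non-initial states that `A` reaches on some suffix
of `w`. -/
theorem mem_suffixDFA_eval {α σ : Type} (A : DFA α σ) (w : List α) (q : {q : σ // q ≠ A.start}) :
    q ∈ (suffixDFA A).eval w ↔ ∃ v, v <:+ w ∧ A.eval v = q := by
  induction w using List.reverseRecOn generalizing q with
  | nil =>
    have h : (suffixDFA A).eval [] = ∅ := rfl
    simp [h, q.2.symm]
  | append_singleton w a ih =>
    rw [DFA.eval_append_singleton]
    change (A.step A.start a = q ∨ ∃ p ∈ (suffixDFA A).eval w, A.step p a = q) ↔ _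
    constructor
    · rintro (h | ⟨p, hp, h⟩)
      · exact ⟨[a], List.suffix_append _ _, by simpa using h⟩
      · obtain ⟨v, ⟨u, rfl⟩, hv⟩ := (ih p).1 hp
        exact ⟨v ++ [a], ⟨u, by simp⟩, by rw [DFA.eval_append_singleton, hv, h]⟩
    · rintro ⟨v, hv, hq⟩
      rcases List.suffix_concat_iff.1 hv with rfl | ⟨v', rfl, hv'⟩
      · exact absurd hq.symm q.2
      · rw [DFA.eval_append_singleton] at hq
        by_cases hs : A.eval v' = A.start
        · exact .inl (by rwa [hs] at hq)
        · exact .inr ⟨⟨_, hs⟩, (ih _).2 ⟨v', hv', rfl⟩, hq⟩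

theorem suffixDFA_accepts {α σ : Type} (A : DFA α σ) :
    (suffixDFA A).accepts = (⊤ : Language α) * A.accepts := by
  ext w
  rw [DFA.mem_accepts, Language.mem_mul]
  change (A.start ∈ A.accept ∨ ∃ q ∈ (suffixDFA A).eval w, (q : σ) ∈ A.accept) ↔ _
  constructor
  · rintro (h | ⟨q, hq, h⟩)
    · exact ⟨w, trivial, [], h, by simp⟩
    · obtain ⟨v, ⟨u, rfl⟩, hv⟩ := (mem_suffixDFA_eval A w q).1 hq
      exact ⟨u, trivial, v, by rwa [DFA.mem_accepts, hv], rfl⟩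
  · rintro ⟨u, -, v, hv, rfl⟩
    rw [DFA.mem_accepts] at hv
    by_cases hs : A.eval v = A.start
    · exact .inl (hs ▸ hv)
    · exact .inr ⟨⟨_, hs⟩, (mem_suffixDFA_eval A _ _).2 ⟨v, List.suffix_append _ _, rfl⟩, hv⟩

/-- If `P` is accepted by an `m`-state DFA and `T` by an `n`-state DFA, then
`(Σ*·P) ∩ T` is accepted by some DFA with `2^(m-1)·n` states. -/
theorem suffix_matching_upper {α : Type} (m n : ℕ) (hm : 2 ≤ m) (hn : 2 ≤ n)
    (P T : Language α) (hP : AcceptedByDFAWith P m) (hT : AcceptedByDFAWith T n) :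
    AcceptedByDFAWith (((⊤ : Language α) * P) ⊓ T) (2 ^ (m - 1) * n) := by
  classical
  obtain ⟨A, rfl⟩ := hP
  obtain ⟨B, rfl⟩ := hT
  have hcard : Fintype.card (Set {q : Fin m // q ≠ A.start} × Fin n) = 2 ^ (m - 1) * n := by
    simp [Fintype.card_subtype_compl]
  refine ⟨DFA.reindex (Fintype.equivFinOfCardEq hcard) ((suffixDFA A).inter B), ?_⟩
  rw [DFA.accepts_reindex, DFA.accepts_inter, suffixDFA_accepts]
end

section
/- For all m, n ≥ 2 there exist languages P and T over the two-letter alphabet Σ = {a, b} such that P is accepted by a DFA with m states, T is accepted by a DFA with n states, and every DFA accepting (Σ*·P) ∩ T has at least 2^(m−1)·n states. -/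
/-!
The text automaton `T` counts one letter modulo `n`. The pattern automaton is chosen so that the
subset automaton of `Σ*·P` is a register of `r = m - 1` bits.

For `m ≥ 3`, the letter `a = 0` sets the lowest bit (and increments the counter of `T`), while
`b = 1` shifts the register by one place, inserting a zero (and leaves the counter alone); the top
bit decides membership in `Σ*·P`. Every combination of register content and counter value is
reachable, since a bit can be set with `a ^ n`, which does not move the counter. Two combinations
with distinct counters are separated by first forcing the top bit to be one. Two combinations with
equal counters and distinct bits are separated by shifting the differing bit to the top; before
that, the counter is brought to its accepting value by a power of `a`, read while the differing bit
is not the lowest one. This last point needs at least two bits.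

For `m = 2` there is a single bit: `a` sets it and does not move the counter, `b` keeps it and
increments the counter.

The lower bound then follows by counting pairwise inequivalent words (`card_le_of_separated`), and
`accepts_eq_top_mul` identifies the register automaton with the language `Σ*·P`.
-/

open Language

/-! ### General facts on automata -/

/-- The Myhill–Nerode lower bound: `B` is a reference automaton, possibly infinite, in which the
words `w i` lead to pairwise inequivalent states. -/
theorem card_le_of_separated {α σ τ ι : Type} [Fintype σ] [Fintype ι]
    (D : DFA α σ) (B : DFA α τ) (h : D.accepts = B.accepts) (w : ι → List α)
    (hd : ∀ i j, i ≠ j → ∃ z, ¬ (B.evalFrom (B.eval (w i)) z ∈ B.accept ↔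
      B.evalFrom (B.eval (w j)) z ∈ B.accept)) :
    Fintype.card ι ≤ Fintype.card σ := by
  refine Fintype.card_le_of_injective (fun i => D.eval (w i)) fun i j hij => ?_
  by_contra hne
  obtain ⟨z, hz⟩ := hd i j hne
  have key : ∀ k, B.evalFrom (B.eval (w k)) z ∈ B.accept ↔
      D.evalFrom (D.eval (w k)) z ∈ D.accept := by
    intro k
    have : w k ++ z ∈ D.accepts ↔ w k ++ z ∈ B.accepts := by rw [h]
    simpa [DFA.mem_accepts, DFA.eval, DFA.evalFrom_of_append] using this.symm
  apply hz
  rw [key i, key j]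
  exact iff_of_eq (congrArg (fun s => D.evalFrom s z ∈ D.accept) hij)

/-- If the states of `A` encode, through `ρ`, the sets of states of `P` reached by the suffixes of
the word read so far, then `A` accepts `Σ*·P`. -/
theorem accepts_eq_top_mul {α τ Q : Type} (A : DFA α τ) (P : DFA α Q) (ρ : τ → Q → Prop)
    (h0 : ∀ q, ρ A.start q ↔ q = P.start)
    (hs : ∀ s c q, ρ (A.step s c) q ↔ q = P.start ∨ ∃ q', ρ s q' ∧ P.step q' c = q)
    (ha : ∀ s, s ∈ A.accept ↔ ∃ q ∈ P.accept, ρ s q) :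
    A.accepts = (⊤ : Language α) * P.accepts := by
  have key : ∀ x q, ρ (A.eval x) q ↔ ∃ u v, u ++ v = x ∧ P.eval v = q := by
    intro x
    induction x using List.reverseRecOn with
    | nil =>
      intro q
      simp [h0, eq_comm]
    | append_singleton x c ih =>
      intro q
      rw [DFA.eval_append_singleton, hs]
      constructor
      · rintro (rfl | ⟨q', h, rfl⟩)
        · exact ⟨x ++ [c], [], by simp, by simp⟩
        · obtain ⟨u, v, rfl, rfl⟩ := (ih q').1 h
          exact ⟨u, v ++ [c], by simp, by simp⟩
      · rintro ⟨u, v, huv, rfl⟩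
        rcases List.eq_nil_or_concat v with rfl | ⟨v, d, rfl⟩
        · left; simp
        · right
          rw [List.concat_eq_append, ← List.append_assoc] at huv
          obtain ⟨h1, h2⟩ := List.append_inj' huv rfl
          obtain rfl : d = c := by simpa using h2
          exact ⟨P.eval v, (ih _).2 ⟨u, v, h1, rfl⟩, by simp⟩
  ext x
  rw [DFA.mem_accepts, ha, Language.mem_mul]
  constructor
  · rintro ⟨q, hq, h⟩
    obtain ⟨u, v, rfl, rfl⟩ := (key x q).1 h
    exact ⟨u, trivial, v, hq, rfl⟩
  · rintro ⟨u, -, v, hv, rfl⟩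
    exact ⟨P.eval v, hv, (key _ _).2 ⟨u, v, rfl, rfl⟩⟩

theorem evalFrom_inter {α σ τ : Type} (A : DFA α σ) (B : DFA α τ) (x : List α) :
    ∀ p, (A.inter B).evalFrom p x = (A.evalFrom p.1 x, B.evalFrom p.2 x) := by
  induction x with
  | nil => intro p; rfl
  | cons c x ih =>
    intro p
    rw [DFA.evalFrom_cons, ih]
    rfl

/-! ### The automaton of the text language -/

/-- The automaton for the words whose number of occurrences of `c` is divisible by `n`. -/
def counterDFA (n : ℕ) (c : Fin 2) : DFA (Fin 2) (ZMod n) where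
  step t d := if d = c then t + 1 else t
  start := 0
  accept := {0}

theorem counter_replicate_self (n : ℕ) (c : Fin 2) (q : ℕ) :
    ∀ t, (counterDFA n c).evalFrom t (List.replicate q c) = t + q := by
  induction q with
  | zero => intro t; simp
  | succ q ih =>
    intro t
    rw [List.replicate_succ, DFA.evalFrom_cons, ih]
    simp only [counterDFA, if_true]
    push_cast
    ring

theorem counter_replicate_ne (n : ℕ) {c d : Fin 2} (h : d ≠ c) (q : ℕ) :
    ∀ t, (counterDFA n c).evalFrom t (List.replicate q d) = t := by
  induction q with
  | zero => intro t; simp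
  | succ q ih =>
    intro t
    rw [List.replicate_succ, DFA.evalFrom_cons, ih]
    simp [counterDFA, h]

/-- The lower bound, reduced to properties of an automaton `A` for `Σ*·P`. -/
theorem lower_of_separated {m n r : ℕ} {τ : Type} [NeZero n] (hr : m - 1 = r) (c : Fin 2)
    (P : DFA (Fin 2) (Fin m)) (A : DFA (Fin 2) τ)
    (hA : A.accepts = (⊤ : Language (Fin 2)) * P.accepts)
    (w : (Fin r → Bool) × ZMod n → List (Fin 2))
    (hw : ∀ i, (counterDFA n c).eval (w i) = i.2)
    (hd : ∀ i j, i ≠ j → ∃ z,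
      ¬ ((A.evalFrom (A.eval (w i)) z ∈ A.accept ∧ (counterDFA n c).evalFrom i.2 z = 0) ↔
        (A.evalFrom (A.eval (w j)) z ∈ A.accept ∧ (counterDFA n c).evalFrom j.2 z = 0))) :
    ∃ P T : Language (Fin 2),
      AcceptedByDFAWith P m ∧ AcceptedByDFAWith T n ∧
      ∀ (σ : Type) [Fintype σ] (D : DFA (Fin 2) σ),
        D.accepts = ((⊤ : Language (Fin 2)) * P) ⊓ T → 2 ^ (m - 1) * n ≤ Fintype.card σ := by
  refine ⟨P.accepts, (counterDFA n c).accepts, ⟨P, rfl⟩, ?_, ?_⟩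
  · obtain ⟨n, rfl⟩ := Nat.exists_eq_succ_of_ne_zero (NeZero.ne n)
    -- `ZMod (n + 1)` is `Fin (n + 1)` by definition.
    exact ⟨counterDFA (n + 1) c, rfl⟩
  · intro σ _ D hD
    have := card_le_of_separated D (A.inter (counterDFA n c))
      (by rw [DFA.accepts_inter, hA, hD]) w (by
        intro i j hij
        obtain ⟨z, hz⟩ := hd i j hij
        refine ⟨z, ?_⟩
        rw [← hw i, ← hw j] at hz
        simp only [DFA.eval, evalFrom_inter] at hz ⊢
        exact hz)
    simpa [hr, ZMod.card] using this

/-! ### Patterns with at least three states -/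

/-- The pattern automaton. In `Fin (k + 3)` the successor of the last state is `0`, so `1` sends
the last state back to the initial one. -/
def shiftPattern (k : ℕ) : DFA (Fin 2) (Fin (k + 3)) where
  step q d := if d = 0 then (if q = 0 then 1 else q) else (if q = 0 then 0 else q + 1)
  start := 0
  accept := {Fin.last _}

/-- The register automaton, with infinitely many bits; only the bits `0, …, k + 1` matter. Bit `i`
stands for the presence of the state `i + 1` of `shiftPattern k`. -/
def register (k : ℕ) : DFA (Fin 2) (ℕ → Bool) where
  step s d := fun i => if d = 0 then (if i = 0 then true else s i)
    else (if i = 0 then false else s (i - 1))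
  start := fun _ => false
  accept := {s | s (k + 1) = true}

theorem register_accepts (k : ℕ) :
    (register k).accepts = (⊤ : Language (Fin 2)) * (shiftPattern k).accepts := by
  refine accepts_eq_top_mul _ _ (fun s q => q = 0 ∨ s (q.val - 1) = true) ?_ ?_ ?_
  · intro q; simp [register, shiftPattern]
  · intro s c q
    by_cases hq : q = 0
    · simp [hq, shiftPattern]
    have hq' : q.val ≠ 0 := fun h => hq (Fin.ext h)
    by_cases hc : c = 0
    · subst hc
      simp only [register, shiftPattern, hq, if_true, false_or]
      by_cases h1 : q.val - 1 = 0
      · have : q = 1 := Fin.ext (by simp; omega)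
        simp only [h1, if_true, true_iff]
        exact ⟨0, by simp [this]⟩
      · simp only [h1, if_false]
        constructor
        · intro h; exact ⟨q, by simp [hq, h]⟩
        · rintro ⟨q', h, h2⟩
          split_ifs at h2 with h3
          · subst h2; simp at h1
          · subst h2; simpa [h3] using h
    · simp only [register, shiftPattern, hq, hc, if_false, false_or]
      by_cases h1 : q.val - 1 = 0
      · have : q = 1 := Fin.ext (by simp; omega)
        simp only [h1, if_true]
        constructor
        · simp
        · rintro ⟨q', h, h2⟩
          split_ifs at h2 with h3
          · exact absurd h2.symm hq
          · rw [this] at h2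
            exact absurd (by simpa using h2) h3
      · simp only [h1, if_false]
        constructor
        · intro h
          refine ⟨⟨q.val - 1, by omega⟩, Or.inr h, ?_⟩
          rw [if_neg (fun h => h1 (congrArg Fin.val h))]
          apply Fin.ext
          rw [Fin.val_add_one_of_lt (by rw [Fin.lt_def]; simp; omega)]
          simp; omega
        · rintro ⟨q', h, h2⟩
          split_ifs at h2 with h3
          · exact absurd h2.symm hq
          · subst h2
            have hl : q' < Fin.last _ := by
              rw [Fin.lt_last_iff_ne_last]
              rintro rfl
              exact hq (by simp)
            rw [Fin.val_add_one_of_lt hl]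
            simpa [h3] using h
  · intro s
    simp [register, shiftPattern]

theorem register_shift (k p : ℕ) :
    ∀ s i, (register k).evalFrom s (List.replicate p 1) (i + p) = s i := by
  induction p with
  | zero => intro s i; simp
  | succ p ih =>
    intro s i
    rw [List.replicate_succ, DFA.evalFrom_cons, show i + (p + 1) = (i + 1) + p by omega, ih]
    simp [register]

theorem register_set_succ (k q : ℕ) :
    ∀ s i, (register k).evalFrom s (List.replicate q 0) (i + 1) = s (i + 1) := by
  induction q with
  | zero => intro s i; simp
  | succ q ih =>
    intro s i
    rw [List.replicate_succ, DFA.evalFrom_cons, ih]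
    simp [register]

theorem register_set_zero (k q : ℕ) :
    ∀ s, (register k).evalFrom s (List.replicate q 0) 0 = (s 0 || decide (q ≠ 0)) := by
  induction q with
  | zero => intro s; simp
  | succ q ih =>
    intro s
    rw [List.replicate_succ, DFA.evalFrom_cons, ih]
    simp [register]

/-- Any register content can be written without changing the counter, since bits are set with
`n` copies of the letter `0`. -/
theorem register_reach (k n : ℕ) (hn : n ≠ 0) (l : ℕ) : ∀ (S s : ℕ → Bool), ∃ y,
    (∀ t, (counterDFA n 0).evalFrom t y = t) ∧
      ∀ i < l, (register k).evalFrom s y i = S i := by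
  induction l with
  | zero => intro S s; exact ⟨[], by simp⟩
  | succ l ih =>
    intro S s
    obtain ⟨y, hy, hS⟩ := ih (fun i => S (i + 1)) s
    refine ⟨y ++ (List.replicate 1 1 ++ List.replicate (if S 0 then n else 0) 0), ?_, ?_⟩
    · intro t
      rw [DFA.evalFrom_of_append, DFA.evalFrom_of_append, hy,
        counter_replicate_ne n (show (1 : Fin 2) ≠ 0 by decide), counter_replicate_self]
      split_ifs <;> simp
    · intro i hi
      rw [DFA.evalFrom_of_append, DFA.evalFrom_of_append]
      rcases i with _ | i
      · rw [register_set_zero]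
        cases h : S 0 <;> simp [register, hn]
      · rw [register_set_succ, register_shift, hS i (by omega)]

theorem lower_three (k n : ℕ) [NeZero n] :
    ∃ P T : Language (Fin 2),
      AcceptedByDFAWith P (k + 3) ∧ AcceptedByDFAWith T n ∧
      ∀ (σ : Type) [Fintype σ] (D : DFA (Fin 2) σ),
        D.accepts = ((⊤ : Language (Fin 2)) * P) ⊓ T →
          2 ^ (k + 3 - 1) * n ≤ Fintype.card σ := by
  have hn : n ≠ 0 := NeZero.ne n
  have hreach : ∀ i : (Fin (k + 2) → Bool) × ZMod n, ∃ x,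
      (counterDFA n 0).eval x = i.2 ∧ ∀ j : Fin (k + 2), (register k).eval x j = i.1 j := by
    rintro ⟨S, t⟩
    obtain ⟨y, hy, hS⟩ := register_reach k n hn (k + 2)
      (fun j => if h : j < k + 2 then S ⟨j, h⟩ else false)
      ((register k).eval (List.replicate t.val 0))
    refine ⟨List.replicate t.val 0 ++ y, ?_, ?_⟩
    · rw [DFA.eval, DFA.evalFrom_of_append, hy, counter_replicate_self]
      simp [counterDFA]
    · intro j
      rw [DFA.eval, DFA.evalFrom_of_append]
      exact (hS j j.2).trans (by simp)
  choose w hw hbit using hreach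
  refine lower_of_separated (r := k + 2) (by omega) 0 _ _ (register_accepts k) w hw ?_
  rintro ⟨S, t⟩ ⟨S', t'⟩ hne
  have hb := hbit (S, t)
  have hb' := hbit (S', t')
  generalize (register k).eval (w (S, t)) = s at hb ⊢
  generalize (register k).eval (w (S', t')) = s' at hb' ⊢
  simp only at hb hb'
  by_cases ht : t = t'
  · subst ht
    obtain ⟨j, hj⟩ : ∃ j, S j ≠ S' j := by
      by_contra! h
      exact hne (by rw [funext h])
    rw [← hb, ← hb'] at hj
    rcases Nat.lt_or_ge j.val (k + 1) with hlt | hge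
    · -- The first shift keeps the differing bit away from position `0`.
      refine ⟨List.replicate 1 1 ++
        (List.replicate (-t).val 0 ++ List.replicate (k - j.val) 1), ?_⟩
      have e : ∀ s : ℕ → Bool, (register k).evalFrom s (List.replicate 1 1 ++
          (List.replicate (-t).val 0 ++ List.replicate (k - j.val) 1)) (k + 1) = s j := by
        intro s
        rw [DFA.evalFrom_of_append, DFA.evalFrom_of_append,
          show k + 1 = (j.val + 1) + (k - j.val) by omega, register_shift,
          register_set_succ, register_shift]
      have e2 : (counterDFA n 0).evalFrom t (List.replicate 1 1 ++
          (List.replicate (-t).val 0 ++ List.replicate (k - j.val) 1)) = 0 := by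
        rw [DFA.evalFrom_of_append, DFA.evalFrom_of_append,
          counter_replicate_ne n (show (1 : Fin 2) ≠ 0 by decide), counter_replicate_self,
          counter_replicate_ne n (show (1 : Fin 2) ≠ 0 by decide)]
        simp
      have hacc : ∀ s : ℕ → Bool, s ∈ (register k).accept ↔ s (k + 1) = true := fun _ => Iff.rfl
      simp only [hacc, e, e2, and_true]
      exact fun h => hj (Bool.eq_iff_iff.2 h)
    · have hjk : j.val = k + 1 := by omega
      refine ⟨List.replicate (-t).val 0, ?_⟩
      have hacc : ∀ s : ℕ → Bool, s ∈ (register k).accept ↔ s (k + 1) = true := fun _ => Iff.rfl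
      simp only [hacc, register_set_succ, counter_replicate_self]
      rw [hjk] at hj
      simpa using fun h => hj (Bool.eq_iff_iff.2 h)
  · refine ⟨List.replicate n 0 ++ (List.replicate (k + 1) 1 ++ List.replicate (-t).val 0), ?_⟩
    have e : ∀ s : ℕ → Bool, (register k).evalFrom s (List.replicate n 0 ++
        (List.replicate (k + 1) 1 ++ List.replicate (-t).val 0)) ∈ (register k).accept := by
      intro s
      change _ = true
      rw [DFA.evalFrom_of_append, DFA.evalFrom_of_append, register_set_succ]
      have := register_shift k (k + 1) ((register k).evalFrom s (List.replicate n 0)) 0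
      rw [zero_add] at this
      rw [this, register_set_zero]
      simp [hn]
    have e2 : ∀ u, (counterDFA n 0).evalFrom u (List.replicate n 0 ++
        (List.replicate (k + 1) 1 ++ List.replicate (-t).val 0)) = u - t := by
      intro u
      rw [DFA.evalFrom_of_append, DFA.evalFrom_of_append, counter_replicate_self,
        counter_replicate_ne n (show (1 : Fin 2) ≠ 0 by decide), counter_replicate_self]
      simp [sub_eq_add_neg]
    simp only [e, e2, true_and, sub_self, true_iff, sub_eq_zero]
    exact fun h => ht h.symm

/-! ### Patterns with two states -/

/-- The automaton for the words containing the letter `0`. -/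
def flagPattern : DFA (Fin 2) (Fin 2) where
  step q d := if d = 0 then 1 else q
  start := 0
  accept := {1}

/-- The same automaton with Boolean states: the presence of state `1` in the set of reached
states. -/
def flag : DFA (Fin 2) Bool where
  step s d := if d = 0 then true else s
  start := false
  accept := {true}

theorem flag_accepts : flag.accepts = (⊤ : Language (Fin 2)) * flagPattern.accepts := by
  refine accepts_eq_top_mul _ _ (fun s q => q = 0 ∨ s = true) ?_ ?_ ?_
  · intro q; simp [flag, flagPattern]
  · simp only [flag, flagPattern]; decide
  · intro s; simp [flag, flagPattern]

theorem flag_replicate (q : ℕ) : ∀ s, flag.evalFrom s (List.replicate q 1) = s := by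
  induction q with
  | zero => intro s; simp
  | succ q ih =>
    intro s
    rw [List.replicate_succ, DFA.evalFrom_cons, ih]
    simp [flag]

theorem lower_two (n : ℕ) [NeZero n] :
    ∃ P T : Language (Fin 2),
      AcceptedByDFAWith P 2 ∧ AcceptedByDFAWith T n ∧
      ∀ (σ : Type) [Fintype σ] (D : DFA (Fin 2) σ),
        D.accepts = ((⊤ : Language (Fin 2)) * P) ⊓ T →
          2 ^ (2 - 1) * n ≤ Fintype.card σ := by
  have hset : ∀ s, flag.evalFrom s (List.replicate 1 0) = true := by
    intro s; simp [flag]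
  have hflag : ∀ i : (Fin 1 → Bool) × ZMod n, flag.eval (List.replicate i.2.val 1 ++
      List.replicate (if i.1 0 then 1 else 0) 0) = i.1 0 := by
    intro i
    rw [DFA.eval, DFA.evalFrom_of_append, flag_replicate]
    cases i.1 0 <;> simp [flag]
  refine lower_of_separated (r := 1) rfl 1 _ _ flag_accepts (fun i =>
    List.replicate i.2.val 1 ++ List.replicate (if i.1 0 then 1 else 0) 0) ?_ ?_
  · intro i
    rw [DFA.eval, DFA.evalFrom_of_append, counter_replicate_self,
      counter_replicate_ne n (show (0 : Fin 2) ≠ 1 by decide)]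
    simp [counterDFA]
  rintro ⟨S, t⟩ ⟨S', t'⟩ hne
  have h1 := hflag (S, t)
  have h2 := hflag (S', t')
  simp only at h1 h2 ⊢
  rw [h1, h2]
  have hacc : ∀ s, s ∈ flag.accept ↔ s = true := fun _ => Iff.rfl
  by_cases ht : t = t'
  · subst ht
    refine ⟨List.replicate (-t).val 1, ?_⟩
    simp only [flag_replicate, counter_replicate_self, hacc]
    have hS : S 0 ≠ S' 0 := by
      intro h
      apply hne
      rw [Prod.mk.injEq]
      exact ⟨funext fun i => by rw [Subsingleton.elim i 0, h], rfl⟩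
    simpa using fun h => hS (Bool.eq_iff_iff.2 h)
  · refine ⟨List.replicate 1 0 ++ List.replicate (-t).val 1, ?_⟩
    simp only [DFA.evalFrom_of_append, hset, flag_replicate, hacc,
      counter_replicate_ne n (show (0 : Fin 2) ≠ 1 by decide), counter_replicate_self]
    simp only [ZMod.natCast_val, ZMod.cast_id', id_eq, ← sub_eq_add_neg, sub_self, true_and,
      true_iff, sub_eq_zero]
    exact fun h => ht h.symm

/-- Tightness of the `2^(m-1)·n` bound for suffix matching over a binary alphabet. -/
theorem suffix_matching_lower (m n : ℕ) (hm : 2 ≤ m) (hn : 2 ≤ n) :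
    ∃ P T : Language (Fin 2),
      AcceptedByDFAWith P m ∧ AcceptedByDFAWith T n ∧
      ∀ (σ : Type) [Fintype σ] (D : DFA (Fin 2) σ),
        D.accepts = ((⊤ : Language (Fin 2)) * P) ⊓ T → 2 ^ (m - 1) * n ≤ Fintype.card σ := by
  have : NeZero n := ⟨by omega⟩
  rcases hm.eq_or_lt with rfl | hm
  · exact lower_two n
  · obtain ⟨k, rfl⟩ := Nat.exists_eq_add_of_le' hm
    exact lower_three k n
end

section
/- Let Σ be any alphabet and let m, n ≥ 3. If P and T are languages over Σ such that P is accepted by some DFA with m states and T is accepted by some DFA with n states, then the language (Σ*·P·Σ*) ∩ T is accepted by some DFA with (2^(m−2)+1)·n states. -/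
/-!
The proof determinizes the obvious nondeterministic factor-matching automaton, phrased through
invariants of words instead of explicit transitions (`acceptedByDFAWith_of_invariant`).

Let `M` be an `m`-state DFA for `P`, with initial state `s`. For a word `w`, let `R w`
(`suffixStates`) be the set of states that `M` reaches from `s` on the suffixes of `w`. It always
contains `s` (empty suffix), it satisfies `R (wa) = {s} ∪ step (R w) a`, and `wa` has a factor in
`P` iff `w` does or `R (wa)` meets the accepting set. As long as `w` has no factor in `P`, `R w`
avoids all accepting states, so it is determined by its trace on the states that are neither
initial nor accepting. If `s` is not accepting and some state is, at most `m - 2` states remain.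
Together with a single sink for the words that do have a factor in `P`, this gives at most
`2 ^ (m - 2) + 1` values, and pairing with the state of a DFA for `T` gives the bound. If `s` is
accepting then every word has a factor in `P` and the language is `T`; if no state is accepting
then the language is empty.
-/

open Language

/-- The easy half of Myhill–Nerode: a right-invariant map `f` to a type with at most `k` elements
that determines membership in `L` yields a DFA for `L` with exactly `k` states, unused elements of
`Fin k` serving as unreachable states. -/
lemma acceptedByDFAWith_of_invariant {α σ : Type} [Finite σ] {L : Language α} {k : ℕ}
    (hk : Nat.card σ ≤ k) (f : List α → σ)
    (hstep : ∀ x y a, f x = f y → f (x ++ [a]) = f (y ++ [a]))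
    (hL : ∀ x y, f x = f y → (x ∈ L ↔ y ∈ L)) : AcceptedByDFAWith L k := by
  have := Fintype.ofFinite σ
  obtain ⟨e⟩ : Nonempty (σ ↪ Fin k) := by
    apply Function.Embedding.nonempty_of_card_le
    simpa [Nat.card_eq_fintype_card] using hk
  -- `r` chooses a representative word for each state.
  let r : Fin k → List α := Function.invFun (fun w => e (f w))
  have hr (w : List α) : f (r (e (f w))) = f w :=
    e.injective (Function.invFun_eq (f := fun w => e (f w)) ⟨w, rfl⟩)
  let M : DFA α (Fin k) :=
    { step := fun i a => e (f (r i ++ [a]))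
      start := e (f [])
      accept := {i | r i ∈ L} }
  have hM (w : List α) : M.eval w = e (f w) := by
    induction w using List.reverseRecOn with
    | nil => rfl
    | append_singleton w a ih =>
      rw [DFA.eval_append_singleton, ih]
      exact congrArg e (hstep _ _ a (hr w))
  refine ⟨M, ?_⟩
  ext w
  rw [DFA.mem_accepts, hM]
  exact hL _ _ (hr w)

lemma mem_top_mul_mul_top {α : Type} (P : Language α) (w : List α) :
    w ∈ (⊤ : Language α) * P * (⊤ : Language α) ↔ ∃ v ∈ P, v <:+: w := by
  constructor
  · rintro ⟨_, ⟨u, _, v, hv, rfl⟩, t, _, rfl⟩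
    exact ⟨v, hv, u, t, rfl⟩
  · rintro ⟨v, hv, u, t, rfl⟩
    exact ⟨u ++ v, ⟨u, trivial, v, hv, rfl⟩, t, trivial, rfl⟩

/-- The states that `M` reaches from its initial state on the suffixes of `w`, i.e. the state
reached on `w` in the subset construction for `Σ* · M.accepts`. -/
def suffixStates {α σ : Type} (M : DFA α σ) (w : List α) : Set σ :=
  {q | ∃ v, v <:+ w ∧ M.eval v = q}

lemma start_mem_suffixStates {α σ : Type} (M : DFA α σ) (w : List α) :
    M.start ∈ suffixStates M w :=
  ⟨[], List.nil_suffix, rfl⟩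

lemma suffixStates_append_singleton {α σ : Type} (M : DFA α σ) (w : List α) (a : α) :
    suffixStates M (w ++ [a]) = insert M.start ((fun q => M.step q a) '' suffixStates M w) := by
  ext q
  constructor
  · rintro ⟨v, hv, rfl⟩
    rcases List.suffix_concat_iff.1 hv with rfl | ⟨t, rfl, ht⟩
    · exact Or.inl rfl
    · exact Or.inr ⟨_, ⟨t, ht, rfl⟩, (M.eval_append_singleton t a).symm⟩
  · rintro (rfl | ⟨_, ⟨t, ht, rfl⟩, rfl⟩)
    · exact start_mem_suffixStates M _
    · exact ⟨t ++ [a], List.suffix_concat_iff.2 (Or.inr ⟨t, rfl, ht⟩),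
        M.eval_append_singleton t a⟩

/-- `w` has a factor accepted by `M`. -/
def HasFactor {α σ : Type} (M : DFA α σ) (w : List α) : Prop :=
  ∃ v ∈ M.accepts, v <:+: w

lemma hasFactor_append_singleton {α σ : Type} (M : DFA α σ) (w : List α) (a : α) :
    HasFactor M (w ++ [a]) ↔
      HasFactor M w ∨ ∃ q ∈ suffixStates M (w ++ [a]), q ∈ M.accept := by
  constructor
  · rintro ⟨v, hv, hw⟩
    rcases List.infix_concat_iff.1 hw with h | h
    · exact Or.inr ⟨_, ⟨v, h, rfl⟩, hv⟩
    · exact Or.inl ⟨v, hv, h⟩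
  · rintro (⟨v, hv, h⟩ | ⟨_, ⟨v, h, rfl⟩, hq⟩)
    · exact ⟨v, hv, List.infix_concat_iff.2 (Or.inr h)⟩
    · exact ⟨v, hq, h.isInfix⟩

lemma notMem_accept_of_not_hasFactor {α σ : Type} (M : DFA α σ) {w : List α}
    (hw : ¬ HasFactor M w) {q : σ} (hq : q ∈ suffixStates M w) : q ∉ M.accept := by
  obtain ⟨v, hv, rfl⟩ := hq
  exact fun h => hw ⟨v, h, hv.isInfix⟩

open Classical in
/-- The state reached on `w` in the reduced subset automaton: the sink `none` once a factor
accepted by `M` has occurred, and otherwise the trace of `suffixStates M w` on the states that are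
neither initial nor accepting. -/
noncomputable def reducedState {α σ : Type} (M : DFA α σ) (w : List α) :
    Option (Set {q : σ // q ≠ M.start ∧ q ∉ M.accept}) :=
  if HasFactor M w then none else some {q | q.1 ∈ suffixStates M w}

lemma hasFactor_iff_of_reducedState_eq {α σ : Type} (M : DFA α σ) {x y : List α}
    (h : reducedState M x = reducedState M y) : HasFactor M x ↔ HasFactor M y := by
  unfold reducedState at h
  split_ifs at h <;> simp_all

/-- Outside the sink nothing is lost by the reduction: the initial state is always present in
`suffixStates`, and accepting states are always absent. -/
lemma suffixStates_eq_of_reducedState_eq {α σ : Type} (M : DFA α σ) {x y : List α}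
    (h : reducedState M x = reducedState M y) (hx : ¬ HasFactor M x) :
    suffixStates M x = suffixStates M y := by
  have hy := mt (hasFactor_iff_of_reducedState_eq M h).2 hx
  simp only [reducedState, hx, hy, if_false, Option.some.injEq] at h
  ext q
  by_cases hs : q = M.start
  · subst hs
    exact iff_of_true (start_mem_suffixStates M x) (start_mem_suffixStates M y)
  by_cases ha : q ∈ M.accept
  · exact iff_of_false (fun hq => notMem_accept_of_not_hasFactor M hx hq ha)
      (fun hq => notMem_accept_of_not_hasFactor M hy hq ha)
  · exact Set.ext_iff.1 h ⟨q, hs, ha⟩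

lemma reducedState_append_singleton {α σ : Type} (M : DFA α σ) {x y : List α} (a : α)
    (h : reducedState M x = reducedState M y) :
    reducedState M (x ++ [a]) = reducedState M (y ++ [a]) := by
  have hxy := hasFactor_iff_of_reducedState_eq M h
  by_cases hx : HasFactor M x
  · have hxa := (hasFactor_append_singleton M x a).2 (Or.inl hx)
    have hya := (hasFactor_append_singleton M y a).2 (Or.inl (hxy.1 hx))
    simp [reducedState, hxa, hya]
  · have hR : suffixStates M (x ++ [a]) = suffixStates M (y ++ [a]) := by
      rw [suffixStates_append_singleton, suffixStates_append_singleton,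
        suffixStates_eq_of_reducedState_eq M h hx]
    have hF : HasFactor M (x ++ [a]) ↔ HasFactor M (y ++ [a]) := by
      rw [hasFactor_append_singleton, hasFactor_append_singleton, hR, hxy]
    by_cases hxa : HasFactor M (x ++ [a])
    · simp [reducedState, hxa, hF.1 hxa]
    · simp [reducedState, hxa, mt hF.2 hxa, hR]

lemma card_reducedState_le {α : Type} {m : ℕ} (M : DFA α (Fin m))
    (hs : M.start ∉ M.accept) (ha : M.accept.Nonempty) :
    Nat.card (Option (Set {q : Fin m // q ≠ M.start ∧ q ∉ M.accept})) ≤ 2 ^ (m - 2) + 1 := by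
  classical
  obtain ⟨f, hf⟩ := ha
  have hne : M.start ≠ f := fun h => hs (h ▸ hf)
  have hcard : Nat.card {q : Fin m // q ≠ M.start ∧ q ∉ M.accept} ≤ m - 2 := by
    rw [Nat.card_eq_fintype_card, Fintype.card_subtype]
    calc _ ≤ (({M.start, f} : Finset (Fin m))ᶜ).card := by
          apply Finset.card_le_card
          intro q
          simp only [Finset.mem_filter, Finset.mem_univ, true_and, Finset.mem_compl,
            Finset.mem_insert, Finset.mem_singleton, not_or]
          exact fun h => ⟨h.1, fun hq => h.2 (hq ▸ hf)⟩
      _ = m - 2 := by rw [Finset.card_compl, Finset.card_pair hne, Fintype.card_fin]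
  rw [Finite.card_option, Nat.card_eq_fintype_card, Fintype.card_set,
    ← Nat.card_eq_fintype_card]
  exact Nat.add_le_add_right (Nat.pow_le_pow_right two_pos hcard) 1

/-- If `P` is accepted by an `m`-state DFA and `T` by an `n`-state DFA, then
`(Σ*·P·Σ*) ∩ T` is accepted by some DFA with `(2^(m-2)+1)·n` states. -/
theorem factor_matching_upper {α : Type} (m n : ℕ) (hm : 3 ≤ m) (hn : 3 ≤ n)
    (P T : Language α) (hP : AcceptedByDFAWith P m) (hT : AcceptedByDFAWith T n) :
    AcceptedByDFAWith (((⊤ : Language α) * P * (⊤ : Language α)) ⊓ T)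
      ((2 ^ (m - 2) + 1) * n) := by
  obtain ⟨M, rfl⟩ := hP
  obtain ⟨N, rfl⟩ := hT
  have hmem (w : List α) :
      w ∈ ((⊤ : Language α) * M.accepts * (⊤ : Language α)) ⊓ N.accepts ↔
        HasFactor M w ∧ N.eval w ∈ N.accept :=
    and_congr_left' (mem_top_mul_mul_top _ w)
  have hle : n ≤ (2 ^ (m - 2) + 1) * n := Nat.le_mul_of_pos_left n (by positivity)
  by_cases hs : M.start ∈ M.accept
  · -- The empty word is in `P`, so only the state of `N` matters.
    have hF (w : List α) : HasFactor M w := ⟨[], hs, List.nil_infix⟩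
    refine acceptedByDFAWith_of_invariant (by simpa using hle) N.eval ?_ ?_
    · intro x y a h
      simp [h]
    · intro x y h
      simp only [hmem, hF, h]
  rcases M.accept.eq_empty_or_nonempty with ha | ha
  · -- The language is empty, so a constant invariant suffices.
    have hF (w : List α) : ¬ HasFactor M w := by
      rintro ⟨v, hv, -⟩
      rw [DFA.mem_accepts, ha] at hv
      exact hv
    refine acceptedByDFAWith_of_invariant (σ := Unit) ?_ (fun _ => ()) ?_ ?_
    · rw [Nat.card_unique]
      omega
    · exact fun _ _ _ _ => rfl
    · intro x y _
      simp only [hmem, hF, false_and]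
  · refine acceptedByDFAWith_of_invariant ?_ (fun w => (reducedState M w, N.eval w)) ?_ ?_
    · rw [Nat.card_prod, Nat.card_fin]
      exact Nat.mul_le_mul_right n (card_reducedState_le M hs ha)
    · intro x y a h
      obtain ⟨h₁, h₂⟩ := Prod.mk.inj h
      simp only [DFA.eval_append_singleton, h₂, reducedState_append_singleton M a h₁]
    · intro x y h
      obtain ⟨h₁, h₂⟩ := Prod.mk.inj h
      rw [hmem, hmem, h₂, hasFactor_iff_of_reducedState_eq M h₁]
end

section
/- For all m, n ≥ 3 there exist languages P and T over the two-letter alphabet Σ = {a, b} such that P is accepted by a DFA with m states, T is accepted by a DFA with n states, and every DFA accepting (Σ*·P·Σ*) ∩ T has at least (2^(m−2)+1)·n states. -/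
/-!
Write the letters as `a = 1` and `b = 0`, and put `k = m - 2`. The pattern language `P` is chosen so
that the words with a factor in `P` are exactly the words with two `a`s at distance `k`
(`mem_factor_iff`), and `T` consists of the words whose number of `b`s is divisible by `n`
(`mem_textLang_iff`).

A reader looking for two `a`s at distance `k` has to remember the last `k` letters until it has found
such a pair, which gives `2 ^ k + 1` situations. Independently of these, the number of `b`s modulo `n`
takes all `n` values, since leading `b`s (before a pair is found) or trailing `b`s (after) adjust it
freely. The representatives are the words `rep k`; they are pairwise inequivalent for the Nerode
relation:
* appending `a b^(k-1) a b^r` completes the pattern whatever came before, hence separates words whose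
  numbers of `b`s differ modulo `n`;
* appending `b^i a b^r` creates a pair iff the letter `i` of the last `k` letters is `a`;
* appending `b^r` never creates a pair, hence separates the words with a pair from those without.
In each case `r` makes the number of `b`s divisible by `n`.
-/

open Language

namespace FactorMatching

/-- The word `w` has two letters `1` at distance `k`. -/
def HasPair (k : ℕ) (w : List (Fin 2)) : Prop :=
  ∃ i, w[i]? = some 1 ∧ w[i + k]? = some 1

/-- Transitions of the pattern automaton. The states `1, …, k` count the letters read since, and
including, a guessed first `1`; `k + 1` is the absorbing accepting state. A failed guess returns
to `0`, so that no separate dead state is needed. -/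
def patStep (k s : ℕ) (c : Fin 2) : ℕ :=
  if s < k then (if s = 0 ∧ c = 0 then 0 else s + 1)
  else if s = k then (if c = 1 then k + 1 else 0)
  else k + 1

theorem patStep_lt (k s : ℕ) (c : Fin 2) : patStep k s c < k + 2 := by
  unfold patStep; split_ifs <;> omega

/-- The `k + 2`-state automaton of the pattern language. -/
def patDFA (k : ℕ) : DFA (Fin 2) (Fin (k + 2)) where
  step s c := ⟨patStep k s c, patStep_lt k s c⟩
  start := 0
  accept := {Fin.last (k + 1)}

/-- A run in a state `s` with `1 ≤ s ≤ k` has read a `1` exactly `s` letters ago, and a run in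
the accepting state has read a pair. -/
theorem patDFA_inv (k : ℕ) (hk : 1 ≤ k) (w : List (Fin 2)) :
    (1 ≤ ((patDFA k).eval w).val → ((patDFA k).eval w).val ≤ k →
      ((patDFA k).eval w).val ≤ w.length ∧
        w[w.length - ((patDFA k).eval w).val]? = some 1) ∧
    (((patDFA k).eval w).val = k + 1 → HasPair k w) := by
  induction w using List.reverseRecOn with
  | nil => simp [patDFA]
  | append_singleton w c ih =>
    rw [DFA.eval_append_singleton]
    generalize (patDFA k).eval w = s at ih
    obtain ⟨ih1, ih2⟩ := ih
    have hs := s.isLt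
    have hstep : ((patDFA k).step s c).val = patStep k s c := rfl
    rw [hstep]
    have hc : c = 0 ∨ c = 1 := by fin_cases c <;> simp
    have mono : HasPair k w → HasPair k (w ++ [c]) := by
      rintro ⟨i, h1, h2⟩
      exact ⟨i, by grind, by grind⟩
    by_cases h0 : s.val = 0
    · rcases hc with rfl | rfl
      · simp [patStep, h0, show 0 < k from hk]
      · have : patStep k s.val 1 = 1 := by simp [patStep, h0, show 0 < k from hk]
        rw [this]
        refine ⟨fun _ _ => ⟨by simp, by simp⟩, fun h => by omega⟩
    · by_cases h1 : s.val < k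
      · have : patStep k s.val c = s.val + 1 := by simp [patStep, h0, h1]
        rw [this]
        obtain ⟨h2, h3⟩ := ih1 (by omega) (by omega)
        refine ⟨fun _ _ => ⟨by simpa using h2, ?_⟩, fun h => by omega⟩
        rw [List.length_append, List.length_singleton, Nat.add_sub_add_right,
          List.getElem?_append_left (by omega), h3]
      · by_cases h4 : s.val = k
        · obtain ⟨h2, h3⟩ := ih1 (by omega) (by omega)
          rcases hc with rfl | rfl
          · simp [patStep, h4]
          · have : patStep k s.val 1 = k + 1 := by simp [patStep, h4]
            rw [this]
            refine ⟨fun _ _ => by omega, fun _ => ⟨w.length - s.val, ?_, ?_⟩⟩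
            · rw [List.getElem?_append_left (by omega), h3]
            · rw [show w.length - s.val + k = w.length by omega]; simp
        · have : patStep k s.val c = k + 1 := by simp [patStep, h1, h4]
          rw [this]
          exact ⟨fun _ _ => by omega, fun _ => mono (ih2 (by omega))⟩

theorem patDFA_run (k : ℕ) (x : List (Fin 2)) (s : Fin (k + 2)) (h1 : 1 ≤ s.val)
    (h2 : s.val + x.length ≤ k) : ((patDFA k).evalFrom s x).val = s.val + x.length := by
  induction x generalizing s with
  | nil => simp
  | cons c x ih =>
    rw [List.length_cons] at h2
    have : ((patDFA k).step s c).val = s.val + 1 := by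
      change patStep k s c = _
      rw [patStep, if_pos (by omega), if_neg (by omega)]
    rw [DFA.evalFrom_cons, ih _ (by omega) (by omega), this, List.length_cons]
    omega

theorem mem_patDFA (k : ℕ) (hk : 1 ≤ k) (x : List (Fin 2)) (hx : x.length + 1 = k) :
    1 :: (x ++ [1]) ∈ (patDFA k).accepts := by
  have h1 : ((patDFA k).step 0 1).val = 1 := by
    change patStep k 0 1 = 1
    simp [patStep, show 0 < k from hk]
  have h2 := patDFA_run k x ((patDFA k).step 0 1) (by omega) (by omega)
  rw [DFA.mem_accepts, DFA.eval, DFA.evalFrom_cons, DFA.evalFrom_append_singleton]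
  change _ = Fin.last (k + 1)
  apply Fin.ext
  change patStep k ((patDFA k).evalFrom ((patDFA k).step 0 1) x).val 1 = k + 1
  rw [h2, h1, patStep, if_neg (by omega), if_pos (by omega), if_pos rfl]

theorem mem_factor_iff (k : ℕ) (hk : 1 ≤ k) (w : List (Fin 2)) :
    w ∈ (⊤ : Language (Fin 2)) * (patDFA k).accepts * (⊤ : Language (Fin 2)) ↔
      HasPair k w := by
  constructor
  · intro h
    obtain ⟨u, hu, z, -, rfl⟩ := Language.mem_mul.1 h
    obtain ⟨x, -, y, hy, rfl⟩ := Language.mem_mul.1 hu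
    have hy' : (patDFA k).eval y = Fin.last (k + 1) := hy
    obtain ⟨i, h1, h2⟩ := (patDFA_inv k hk y).2 (by rw [hy']; rfl)
    exact ⟨x.length + i, by grind, by grind⟩
  · rintro ⟨i, h1, h2⟩
    obtain ⟨hi, h1⟩ := List.getElem?_eq_some_iff.1 h1
    obtain ⟨hik, h2⟩ := List.getElem?_eq_some_iff.1 h2
    have e : w = (w.take i ++ (1 :: (((w.drop (i + 1)).take (k - 1)) ++ [1]))) ++
        w.drop (i + k + 1) := by
      have e1 : w.drop i = 1 :: w.drop (i + 1) := by rw [List.drop_eq_getElem_cons hi, h1]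
      have e2 : w.drop (i + k) = 1 :: w.drop (i + k + 1) := by
        rw [List.drop_eq_getElem_cons hik, h2]
      have e3 : (w.drop (i + 1)).drop (k - 1) = w.drop (i + k) := by
        rw [List.drop_drop]; congr 1; omega
      calc w = w.take i ++ w.drop i := (List.take_append_drop i w).symm
        _ = w.take i ++ (1 :: ((w.drop (i + 1)).take (k - 1) ++
              (w.drop (i + 1)).drop (k - 1))) := by rw [List.take_append_drop (k - 1), ← e1]
        _ = _ := by rw [e3, e2]; simp
    rw [e]
    refine Language.append_mem_mul (Language.append_mem_mul (Set.mem_univ _) ?_)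
      (Set.mem_univ _)
    apply mem_patDFA k hk
    rw [List.length_take, List.length_drop]
    omega

/-- The `n`-state automaton counting the letters `0` modulo `n`. -/
def textDFA (n : ℕ) (hn : 0 < n) : DFA (Fin 2) (Fin n) where
  step q c := ⟨(q.val + if c = 0 then 1 else 0) % n, Nat.mod_lt _ hn⟩
  start := ⟨0, hn⟩
  accept := {⟨0, hn⟩}

theorem textDFA_eval (n : ℕ) (hn : 0 < n) (w : List (Fin 2)) :
    ((textDFA n hn).eval w).val = w.count 0 % n := by
  induction w using List.reverseRecOn with
  | nil => simp [textDFA]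
  | append_singleton w c ih =>
    rw [DFA.eval_append_singleton]
    change (((textDFA n hn).eval w).val + if c = 0 then 1 else 0) % n = _
    rw [ih, List.count_append, Nat.mod_add_mod, List.count_singleton]
    simp

theorem mem_textLang_iff (n : ℕ) (hn : 0 < n) (w : List (Fin 2)) :
    w ∈ (textDFA n hn).accepts ↔ n ∣ w.count 0 := by
  rw [Nat.dvd_iff_mod_eq_zero, ← textDFA_eval n hn, DFA.mem_accepts]
  exact Fin.ext_iff

/-- Representatives of the Nerode classes. An index `some s` stands for a word without pair whose last
`k` letters are `s`; the index `none` stands for a word with a pair. The number `j` of additional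
letters `0` varies the residue of the number of `0`s. -/
def rep (k : ℕ) : Option (Fin k → Fin 2) → ℕ → List (Fin 2)
  | none, j => 1 :: (List.replicate (k - 1) 0 ++ 1 :: List.replicate j 0)
  | some s, j => List.replicate j 0 ++ List.ofFn s

theorem exists_pad (n : ℕ) (hn : 0 < n) (c : ℕ) : ∃ r, n ∣ c + r :=
  ⟨n * c - c, c, by have := Nat.le_mul_of_pos_left c hn; omega⟩

theorem hasPair_full (k : ℕ) (hk : 1 ≤ k) (x y : List (Fin 2)) :
    HasPair k (x ++ 1 :: (List.replicate (k - 1) 0 ++ 1 :: y)) :=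
  ⟨x.length, by simp, by
    rw [List.getElem?_append_right (by omega), Nat.add_sub_cancel_left]
    obtain ⟨l, rfl⟩ := Nat.exists_eq_add_of_le' hk
    simp⟩

/-- Equivalent words have congruent numbers of `0`s: a common suffix completes a pair in both. -/
theorem count_congr {k n : ℕ} (hk : 1 ≤ k) (hn : 0 < n) {x y : List (Fin 2)}
    (h : ∀ z, (HasPair k (x ++ z) ∧ n ∣ (x ++ z).count 0) ↔
      (HasPair k (y ++ z) ∧ n ∣ (y ++ z).count 0)) :
    x.count 0 ≡ y.count 0 [MOD n] := by
  obtain ⟨r, hr⟩ := exists_pad n hn (x.count 0 + (k - 1))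
  have h1 : ∀ u : List (Fin 2),
      (u ++ 1 :: (List.replicate (k - 1) 0 ++ 1 :: List.replicate r 0)).count 0 =
        u.count 0 + ((k - 1) + r) := by
    intro u
    simp [List.count_append]
  have h2 := (h (1 :: (List.replicate (k - 1) 0 ++ 1 :: List.replicate r 0))).1
    ⟨hasPair_full k hk _ _, by rw [h1]; simpa [add_assoc] using hr⟩
  have h3 := h2.2
  rw [h1] at h3
  have h4 : n ∣ x.count 0 + ((k - 1) + r) := by simpa [add_assoc] using hr
  exact Nat.ModEq.add_right_cancel' ((k - 1) + r)
    ((Nat.modEq_zero_iff_dvd.2 h4).trans (Nat.modEq_zero_iff_dvd.2 h3).symm)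

theorem hasPair_rep_some {k : ℕ} (s : Fin k → Fin 2) (j : ℕ) (i : Fin k) (r : ℕ) :
    HasPair k (rep k (some s) j ++ (List.replicate i.val 0 ++ 1 :: List.replicate r 0)) ↔
      s i = 1 := by
  have hi := i.isLt
  constructor
  · rintro ⟨p, h1, h2⟩
    simp only [rep, List.getElem?_append, List.length_append, List.length_replicate,
      List.length_ofFn, List.getElem?_replicate, List.getElem?_cons] at h1 h2
    -- The second `1` of the pair lies beyond `s`, so it is the appended one.
    have hp : p = j + i := by
      have : ¬ p < j := by intro h; simp [h, show p < j + k by omega] at h1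
      by_contra hne
      grind
    subst hp
    simpa using h1
  · intro h
    refine ⟨j + i, ?_, ?_⟩
    · simp [rep, List.getElem?_append, h]
    · rw [List.getElem?_append_right (by simp [rep])]
      simp [rep, show j + i.val + k - (j + k) = i.val by omega]

theorem not_hasPair_rep_some {k : ℕ} (s : Fin k → Fin 2) (j r : ℕ) :
    ¬ HasPair k (rep k (some s) j ++ List.replicate r 0) := by
  rintro ⟨p, h1, h2⟩
  simp only [rep, List.getElem?_append, List.length_append, List.length_replicate,
    List.length_ofFn, List.getElem?_replicate] at h1 h2
  have : ¬ p < j := by intro h; simp [h, show p < j + k by omega] at h1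
  grind

theorem rep_none_not_equiv {k n : ℕ} (hk : 1 ≤ k) (hn : 0 < n) (s : Fin k → Fin 2) (j j' : ℕ)
    (h : ∀ z, (HasPair k (rep k none j ++ z) ∧ n ∣ (rep k none j ++ z).count 0) ↔
      (HasPair k (rep k (some s) j' ++ z) ∧ n ∣ (rep k (some s) j' ++ z).count 0)) :
    False := by
  obtain ⟨r, hr⟩ := exists_pad n hn ((rep k none j).count 0)
  refine not_hasPair_rep_some s j' r ((h (List.replicate r 0)).1 ⟨?_, ?_⟩).1
  · simpa [rep] using hasPair_full k hk [] (List.replicate (j + r) 0)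
  · simpa [List.count_append] using hr

theorem rep_some_le {k n : ℕ} (hn : 0 < n) (s s' : Fin k → Fin 2) (j j' : ℕ)
    (h : ∀ z, (HasPair k (rep k (some s) j ++ z) ∧ n ∣ (rep k (some s) j ++ z).count 0) ↔
      (HasPair k (rep k (some s') j' ++ z) ∧ n ∣ (rep k (some s') j' ++ z).count 0))
    (i : Fin k) (hi : s i = 1) : s' i = 1 := by
  obtain ⟨r, hr⟩ := exists_pad n hn ((rep k (some s) j).count 0 + i.val)
  refine (hasPair_rep_some s' j' i r).1 ((h _).1 ⟨(hasPair_rep_some s j i r).2 hi, ?_⟩).1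
  simpa [List.count_append, List.count_cons, add_assoc] using hr

theorem rep_inj {k n : ℕ} (hk : 1 ≤ k) (hn : 0 < n) (o o' : Option (Fin k → Fin 2))
    (j j' : Fin n)
    (h : ∀ z, (HasPair k (rep k o j ++ z) ∧ n ∣ (rep k o j ++ z).count 0) ↔
      (HasPair k (rep k o' j' ++ z) ∧ n ∣ (rep k o' j' ++ z).count 0)) :
    o = o' ∧ j = j' := by
  have ho : o = o' := by
    match o, o', h with
    | none, none, _ => rfl
    | none, some s, h => exact (rep_none_not_equiv hk hn s _ _ h).elim
    | some s, none, h => exact (rep_none_not_equiv hk hn s _ _ fun z => (h z).symm).elim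
    | some s, some s', h =>
      congr 1
      funext i
      have h1 := rep_some_le hn s s' _ _ h i
      have h2 := rep_some_le hn s' s _ _ (fun z => (h z).symm) i
      generalize s i = c at *
      generalize s' i = d at *
      fin_cases c <;> fin_cases d <;> simp_all
  subst ho
  refine ⟨rfl, ?_⟩
  have hc := count_congr hk hn h
  have hcount : ∃ c, ∀ j, (rep k o j).count 0 = c + j := by
    cases o with
    | none => exact ⟨k - 1, fun j => by simp [rep, List.count_append]⟩
    | some s => exact ⟨(List.ofFn s).count 0, fun j => by
        simp [rep, List.count_append, add_comm]⟩
  obtain ⟨c, hcount⟩ := hcount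
  rw [hcount, hcount] at hc
  exact Fin.ext (Nat.ModEq.eq_of_lt_of_lt (Nat.ModEq.add_left_cancel' c hc) j.isLt j'.isLt)

end FactorMatching

open FactorMatching in
/-- Tightness of the `(2^(m-2)+1)·n` bound for factor matching over a binary alphabet. -/
theorem factor_matching_lower (m n : ℕ) (hm : 3 ≤ m) (hn : 3 ≤ n) :
    ∃ P T : Language (Fin 2),
      AcceptedByDFAWith P m ∧ AcceptedByDFAWith T n ∧
      ∀ (σ : Type) [Fintype σ] (D : DFA (Fin 2) σ),
        D.accepts = ((⊤ : Language (Fin 2)) * P * (⊤ : Language (Fin 2))) ⊓ T →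
          (2 ^ (m - 2) + 1) * n ≤ Fintype.card σ := by
  obtain ⟨k, rfl⟩ := Nat.exists_eq_add_of_le' (show 2 ≤ m by omega)
  have hk : 1 ≤ k := by omega
  have hn' : 0 < n := by omega
  refine ⟨(patDFA k).accepts, (textDFA n hn').accepts, ⟨_, rfl⟩, ⟨_, rfl⟩, ?_⟩
  intro σ _ D hD
  have hmem : ∀ w, w ∈ D.accepts ↔ HasPair k w ∧ n ∣ w.count 0 := by
    intro w
    rw [hD, ← mem_factor_iff k hk, ← mem_textLang_iff n hn']
    rfl
  have hinj : Function.Injective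
      (fun p : Option (Fin k → Fin 2) × Fin n => D.eval (rep k p.1 p.2)) := by
    rintro ⟨o, j⟩ ⟨o', j'⟩ h
    have h' : D.eval (rep k o j) = D.eval (rep k o' j') := h
    obtain ⟨h1, h2⟩ := rep_inj hk hn' o o' j j' (fun z => by
      rw [← hmem, ← hmem, DFA.mem_accepts, DFA.mem_accepts]
      unfold DFA.eval
      rw [DFA.evalFrom_of_append, DFA.evalFrom_of_append]
      change D.evalFrom (D.eval _) z ∈ _ ↔ D.evalFrom (D.eval _) z ∈ _
      rw [h'])
    rw [h1, h2]
  simpa using Fintype.card_le_of_injective _ hinj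
end

section
/- For all m, n ≥ 3 there exist languages P and T over an alphabet Σ with exactly m−1 letters such that P is accepted by a DFA with m states, T is accepted by a DFA with n states, and every DFA accepting (Σ* ⧢ P) ∩ T = {x ∈ T | some w ∈ P is a subsequence of x} has at least (2^(m−2)+1)·n states. -/
/-!
Write `k = m - 2`, call the first `k` letters `a₀, …, aₖ₋₁` and the last one `b`. Take `P` such that
the ideal it generates consists of the words in which some `aᵢ` occurs twice: an automaton with
`k + 2` states remembers the first `aᵢ` it reads, ignores everything else, and accepts once that
letter comes again. Take `T` to be the words whose number of `b`s is divisible by `n`.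

A word then matters only through the set of `aᵢ` seen so far (or the fact that one was repeated) and
the number of `b`s modulo `n`. The words `classWord` realise all `(2 ^ k + 1) * n` combinations, and
they are pairwise inequivalent: appending `a₀ a₀ bⁿ⁻ᵗ` isolates the residue `t`, appending `bⁿ⁻ᵗ`
detects a repetition, and appending `aᵢ bⁿ⁻ᵗ` tests whether `aᵢ` was seen. Hence no two of them can
lead to the same state.
-/

open Language

/-- The pattern automaton. State `0` is initial, state `j + 1` with `j < k` means that `j` was the
first letter below `k`, and state `k + 1` is the accepting sink. The letter `k` is ignored. -/
def patternDFA (k : ℕ) : DFA (Fin (k + 1)) (Fin (k + 2)) where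
  step s a :=
    if a.val = k then s
    else if s.val = 0 then ⟨a.val + 1, by omega⟩
    else if s.val = a.val + 1 then Fin.last (k + 1)
    else s
  start := 0
  accept := {Fin.last (k + 1)}

/-- The automaton counting the occurrences of the last letter modulo `n`. -/
def countDFA (k n : ℕ) [NeZero n] : DFA (Fin (k + 1)) (Fin n) where
  step t a := if a = Fin.last k then t + 1 else t
  start := 0
  accept := {0}

/-- Reaching state `j + 1` requires having read `j`; reaching the sink requires a repetition. -/
lemma patternDFA_eval (k : ℕ) (w : List (Fin (k + 1))) :
    (∀ a : Fin (k + 1), a.val < k → ((patternDFA k).eval w).val = a.val + 1 → 1 ≤ w.count a) ∧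
    (((patternDFA k).eval w).val = k + 1 → ∃ i : Fin k, 2 ≤ w.count i.castSucc) := by
  induction w using List.reverseRecOn with
  | nil => simp [patternDFA]
  | append_singleton w c ih =>
    obtain ⟨h1, h2⟩ := ih
    rw [DFA.eval_append_singleton]
    have hmono : ∀ a, w.count a ≤ (w ++ [c]).count a := fun a => by simp
    have h2' : ((patternDFA k).eval w).val = k + 1 →
        ∃ i : Fin k, 2 ≤ (w ++ [c]).count i.castSucc := fun h =>
      (h2 h).imp fun i hi => hi.trans (hmono _)
    have h1' : ∀ a : Fin (k + 1), a.val < k → ((patternDFA k).eval w).val = a.val + 1 →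
        1 ≤ (w ++ [c]).count a := fun a ha h => (h1 a ha h).trans (hmono _)
    generalize (patternDFA k).eval w = s at *
    simp only [patternDFA]
    split_ifs with hc hs hsc
    · exact ⟨h1', h2'⟩
    · refine ⟨fun a ha h => ?_, fun h => ?_⟩
      · have : a = c := Fin.ext (by simp at h; omega)
        subst this
        simp
      · simp at h; omega
    · refine ⟨fun a ha h => ?_, fun _ => ?_⟩
      · simp at h; omega
      · have hlt : c.val < k := by omega
        have := h1 c hlt hsc
        refine ⟨⟨c.val, hlt⟩, ?_⟩
        have hcc : (⟨c.val, hlt⟩ : Fin k).castSucc = c := rfl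
        rw [hcc]
        simp
        simpa using this
    · exact ⟨h1', h2'⟩

lemma exists_pattern_sublist_iff (k : ℕ) (x : List (Fin (k + 1))) :
    (∃ w ∈ (patternDFA k).accepts, w.Sublist x) ↔ ∃ i : Fin k, 2 ≤ x.count i.castSucc := by
  constructor
  · rintro ⟨w, hw, hwx⟩
    have hw' : (patternDFA k).eval w = Fin.last (k + 1) := hw
    obtain ⟨i, hi⟩ := (patternDFA_eval k w).2 (by rw [hw']; rfl)
    exact ⟨i, hi.trans (hwx.count_le _)⟩
  · rintro ⟨i, hi⟩
    refine ⟨List.replicate 2 i.castSucc, ?_, List.replicate_sublist_iff.2 hi⟩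
    show (patternDFA k).eval _ = Fin.last (k + 1)
    have := i.isLt
    have h' : i.val ≠ k := by omega
    simp [DFA.eval, DFA.evalFrom, List.replicate, patternDFA, h']

lemma countDFA_eval (k n : ℕ) [NeZero n] (x : List (Fin (k + 1))) :
    (countDFA k n).eval x = Fin.ofNat n (x.count (Fin.last k)) := by
  induction x using List.reverseRecOn with
  | nil => simp [countDFA]
  | append_singleton w c ih =>
    rw [DFA.eval_append_singleton, ih]
    by_cases hc : c = Fin.last k
    · subst hc
      ext
      simp [countDFA, Fin.val_add]
    · simp [countDFA, hc]

lemma mem_countDFA_accepts (k n : ℕ) [NeZero n] (x : List (Fin (k + 1))) :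
    x ∈ (countDFA k n).accepts ↔ n ∣ x.count (Fin.last k) := by
  change (countDFA k n).eval x = 0 ↔ _
  rw [countDFA_eval, Fin.ext_iff, Nat.dvd_iff_mod_eq_zero]
  simp

/-- Representatives of the residual classes: `some S` stands for the set `S` of letters seen once
each, `none` for a repetition having occurred, and `t` for the number of last letters. -/
noncomputable def classWord {k : ℕ} (z : Fin k) (o : Option (Finset (Fin k))) (t : ℕ) :
    List (Fin (k + 1)) :=
  (match o with
    | none => List.replicate 2 z.castSucc
    | some S => S.toList.map Fin.castSucc) ++ List.replicate t (Fin.last k)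

lemma count_last_classWord {k : ℕ} (z : Fin k) (o : Option (Finset (Fin k))) (t : ℕ) :
    (classWord z o t).count (Fin.last k) = t := by
  cases o with
  | none =>
    have := (Fin.castSucc_lt_last z).ne
    simp [classWord, this]
  | some S =>
    have : (S.toList.map Fin.castSucc).count (Fin.last k) = 0 := by
      rw [List.count_eq_zero]
      simp [(Fin.castSucc_lt_last _).ne]
    simp [classWord, this]

lemma count_classWord_some {k : ℕ} (z : Fin k) (S : Finset (Fin k)) (t : ℕ) (i : Fin k) :
    (classWord z (some S) t).count i.castSucc = if i ∈ S then 1 else 0 := by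
  have h := (Fin.castSucc_lt_last i).ne'
  have h2 : (S.toList.map Fin.castSucc).count i.castSucc = S.toList.count i :=
    List.count_map_of_injective _ _ (Fin.castSucc_injective k) _
  simp only [classWord, List.count_append, h2, List.count_replicate]
  rw [List.Nodup.count S.nodup_toList]
  simp [h]

lemma count_classWord_none {k : ℕ} (z : Fin k) (t : ℕ) :
    2 ≤ (classWord z none t).count z.castSucc := by
  simp [classWord]

/-- Tightness of the `(2^(m-2)+1)·n` bound for subsequence matching, over an alphabet
with exactly `m-1` letters. -/
theorem subsequence_matching_lower (m n : ℕ) (hm : 3 ≤ m) (hn : 3 ≤ n) :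
    ∃ P T : Language (Fin (m - 1)),
      AcceptedByDFAWith P m ∧ AcceptedByDFAWith T n ∧
      ∀ (σ : Type) [Fintype σ] (D : DFA (Fin (m - 1)) σ),
        D.accepts = ({x : List (Fin (m - 1)) | x ∈ T ∧ ∃ w ∈ P, w.Sublist x} : Language (Fin (m - 1))) →
          (2 ^ (m - 2) + 1) * n ≤ Fintype.card σ := by
  obtain ⟨k, rfl⟩ : ∃ k, m = k + 2 := ⟨m - 2, by omega⟩
  have : NeZero n := ⟨by omega⟩
  change ∃ P T : Language (Fin (k + 1)), _ ∧ _ ∧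
    ∀ (σ : Type) [Fintype σ] (D : DFA (Fin (k + 1)) σ),
        D.accepts = ({x : List (Fin (k + 1)) | x ∈ T ∧ ∃ w ∈ P, w.Sublist x} :
          Language (Fin (k + 1))) → (2 ^ k + 1) * n ≤ Fintype.card σ
  refine ⟨(patternDFA k).accepts, (countDFA k n).accepts, ⟨_, rfl⟩, ⟨_, rfl⟩, ?_⟩
  intro σ _ D hD
  have hmem : ∀ x, x ∈ D.accepts ↔
      n ∣ x.count (Fin.last k) ∧ ∃ i : Fin k, 2 ≤ x.count i.castSucc := fun x => by
    rw [hD]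
    change (_ ∧ _) ↔ _
    rw [mem_countDFA_accepts, exists_pattern_sublist_iff]
  let z : Fin k := ⟨0, by omega⟩
  let f : Option (Finset (Fin k)) × Fin n → σ := fun p => D.eval (classWord z p.1 p.2)
  have hf : Function.Injective f := by
    rintro ⟨o, t⟩ ⟨o', t'⟩ h
    -- Words reaching the same state have the same accepted continuations.
    have key : ∀ y, classWord z o t ++ y ∈ D.accepts ↔ classWord z o' t' ++ y ∈ D.accepts := by
      intro y
      have h' : D.eval (classWord z o t) = D.eval (classWord z o' t') := h
      simp only [DFA.eval] at h'
      simp only [DFA.mem_accepts, DFA.eval, DFA.evalFrom_of_append, h']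
    simp only [hmem, List.count_append, count_last_classWord] at key
    have hz : ∀ i : Fin k, i.castSucc ≠ Fin.last k := fun i => (Fin.castSucc_lt_last i).ne
    have hz' : ∀ i : Fin k, Fin.last k ≠ i.castSucc := fun i => (hz i).symm
    have ht : t = t' := by
      have h1 := (key (List.replicate 2 z.castSucc ++ List.replicate (n - t) (Fin.last k))).1
        ⟨by simp [hz], z, by simp; omega⟩
      obtain ⟨⟨c, hc⟩, -⟩ := h1
      simp [hz] at hc
      have := t.isLt
      have := t'.isLt
      -- The quantity `t' + (n - t)` lies strictly between `0` and `2 * n`.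
      have hc1 : c = 1 := by
        have : 0 < c := by
          rcases Nat.eq_zero_or_pos c with rfl | h
          · omega
          · exact h
        have : c < 2 := by
          by_contra! h
          have := Nat.mul_le_mul_left n h
          omega
        omega
      subst hc1
      exact Fin.ext (by omega)
    subst ht
    have hrep := key (List.replicate (n - t) (Fin.last k))
    have hsee : ∀ i : Fin k, _ := fun i =>
      key (i.castSucc :: List.replicate (n - t) (Fin.last k))
    simp [List.count_replicate, hz'] at hrep
    simp [List.count_replicate, List.count_cons, hz, hz'] at hsee
    have hnone : ∃ i : Fin k, 2 ≤ (classWord z none t).count i.castSucc :=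
      ⟨z, count_classWord_none z t⟩
    have hsome : ∀ S, ¬ ∃ i : Fin k, 2 ≤ (classWord z (some S) t).count i.castSucc := by
      rintro S ⟨i, hi⟩
      rw [count_classWord_some] at hi
      split_ifs at hi <;> omega
    have htest : ∀ S (i : Fin k), (∃ j : Fin k, 2 ≤
        (classWord z (some S) t).count j.castSucc + if i = j then 1 else 0) ↔ i ∈ S := by
      intro S i
      simp only [count_classWord_some]
      constructor
      · rintro ⟨j, hj⟩
        split_ifs at hj with h1 h2 <;> first | omega | (subst h2; exact h1)
      · intro hi
        exact ⟨i, by simp [hi]⟩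
    congr 1
    rcases o with _ | S <;> rcases o' with _ | S'
    · rfl
    · exact absurd (hrep.1 hnone) (hsome S')
    · exact absurd (hrep.2 hnone) (hsome S)
    · congr 1
      ext i
      rw [← htest S i, ← htest S' i]
      exact hsee i
  have := Fintype.card_le_of_injective f hf
  simpa using this
end

section
/- Let Σ be any alphabet, let w be a nonempty word over Σ, and let n ≥ 2. If T is a language over Σ accepted by some DFA with n states, then the language ({w}·Σ*) ∩ T (the words of T that begin with w) is accepted by some DFA with |w| + n + 1 states. (With m = |w| + 2 the state complexity of {w}, this bound is m + n − 1.) -/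
open Language

/-!
The required automaton reads `w` along a chain of `|w|` states, one for each proper prefix of `w`.
Completing `w` leads to the state that `M`, a given `n`-state automaton for `T`, reaches on `w`; from
there a copy of `M` is simulated. Any mismatch along the chain leads to a dead state. This uses
`|w| + n + 1` states. The invariant `prefixDFA_mem_accept_inl` describes the words accepted from the
`i`-th chain state: those of the form `w.drop i ++ y` where `M` accepts `w ++ y`.
-/

open Classical in
/-- The automaton for the words of `M.accepts` that begin with `w`. State `inl i` means that exactly
the first `i < |w|` letters of `w` have been read, `inr (some q)` that `w` has been read as a prefix
and `M` is in state `q`, and `inr none` that the input does not begin with `w`. -/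
noncomputable def prefixDFA {α σ : Type} (w : List α) (hw : w ≠ []) (M : DFA α σ) :
    DFA α (Fin w.length ⊕ Option σ) where
  step
    | .inl i, a =>
      if a = w[i] then
        if h : i.1 + 1 < w.length then .inl ⟨i + 1, h⟩ else .inr (some (M.eval w))
      else .inr none
    | .inr (some q), a => .inr (some (M.step q a))
    | .inr none, _ => .inr none
  start := .inl ⟨0, List.length_pos_iff.mpr hw⟩
  accept := {s | ∃ q ∈ M.accept, s = .inr (some q)}

theorem prefixDFA_evalFrom_some {α σ : Type} (w : List α) (hw : w ≠ []) (M : DFA α σ) (q : σ)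
    (x : List α) :
    (prefixDFA w hw M).evalFrom (.inr (some q)) x = .inr (some (M.evalFrom q x)) := by
  induction x generalizing q with
  | nil => rfl
  | cons a x ih => exact ih (M.step q a)

theorem prefixDFA_evalFrom_none {α σ : Type} (w : List α) (hw : w ≠ []) (M : DFA α σ)
    (x : List α) :
    (prefixDFA w hw M).evalFrom (.inr none) x = .inr none := by
  induction x with
  | nil => rfl
  | cons a x ih => exact ih

theorem prefixDFA_mem_accept_inl {α σ : Type} (w : List α) (hw : w ≠ []) (M : DFA α σ)
    (x : List α) (i : Fin w.length) :
    (prefixDFA w hw M).evalFrom (.inl i) x ∈ (prefixDFA w hw M).accept ↔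
      ∃ y, x = w.drop i ++ y ∧ w ++ y ∈ M.accepts := by
  induction x generalizing i with
  | nil =>
    -- The chain states are not accepting, and `w.drop i` is nonempty.
    simp [prefixDFA]
  | cons a x ih =>
    rw [DFA.evalFrom_cons, List.drop_eq_getElem_cons i.2]
    by_cases ha : a = w[i]
    · by_cases h : i.1 + 1 < w.length
      · have hs : (prefixDFA w hw M).step (.inl i) a = .inl ⟨i + 1, h⟩ := by
          simp only [prefixDFA, if_pos ha, dif_pos h]
        rw [hs, ih]
        simp [ha, -List.getElem_cons_drop]
      · have hs : (prefixDFA w hw M).step (.inl i) a = .inr (some (M.eval w)) := by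
          simp only [prefixDFA, if_pos ha, dif_neg h]
        rw [hs, prefixDFA_evalFrom_some, List.drop_of_length_le (by omega)]
        simp [prefixDFA, ha, DFA.mem_accepts, DFA.eval, DFA.evalFrom_of_append]
    · have hs : (prefixDFA w hw M).step (.inl i) a = .inr none := by
        simp only [prefixDFA, if_neg ha]
      rw [hs, prefixDFA_evalFrom_none]
      have ha' : ¬ a = w[i.1] := ha
      simp [prefixDFA, ha', -List.getElem_cons_drop]

/-- If `w` is a nonempty word and `T` is accepted by an `n`-state DFA, then
`({w}·Σ*) ∩ T` is accepted by some DFA with `|w| + n + 1` states. -/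
theorem single_prefix_upper {α : Type} (w : List α) (hw : w ≠ []) (n : ℕ) (hn : 2 ≤ n)
    (T : Language α) (hT : AcceptedByDFAWith T n) :
    AcceptedByDFAWith ((({w} : Language α) * (⊤ : Language α)) ⊓ T) (w.length + n + 1) := by
  obtain ⟨M, rfl⟩ := hT
  have e : (Fin w.length ⊕ Option (Fin n)) ≃ Fin (w.length + n + 1) :=
    Fintype.equivFinOfCardEq (by simp [add_assoc])
  refine ⟨DFA.reindex e (prefixDFA w hw M), ?_⟩
  rw [DFA.accepts_reindex]
  ext x
  have key : x ∈ (prefixDFA w hw M).accepts ↔ ∃ y, x = w ++ y ∧ w ++ y ∈ M.accepts :=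
    prefixDFA_mem_accept_inl w hw M x ⟨0, List.length_pos_iff.mpr hw⟩
  rw [key]
  constructor
  · rintro ⟨y, rfl, hy⟩
    exact ⟨Language.mem_mul.mpr ⟨w, rfl, y, trivial, rfl⟩, hy⟩
  · rintro ⟨hx, hT⟩
    obtain ⟨_, rfl, y, -, rfl⟩ := Language.mem_mul.mp hx
    exact ⟨y, rfl, hT⟩
end

section
/- Let Σ be a one-letter (unary) alphabet, let w be a nonempty word over Σ, and let n ≥ 2. If T is a language over Σ accepted by some DFA with n states, then the language ({w}·Σ*) ∩ T is accepted by some DFA with |w| + n states. (With m = |w| + 2 the state complexity of {w}, this bound is m + n − 2.) -/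
/-!
Over a unary alphabet a word is determined by its length, so `{w}·Σ*` is the set of words of length
at least `|w|`. A chain of `|w|` fresh rejecting states counts the first `|w|` letters; the step
leaving the chain enters a copy of the given DFA at the state reached by reading `w`. From then on
the new automaton is in the same state as the given one (`delayed_eval`). In total this uses
`|w| + n` states.
-/

open Language

/-- The automaton `M` with its first `w.length` steps replaced by a chain of rejecting states,
the last of which leads to the state of `M` reached by `w`. -/
def delayed {α σ : Type} (M : DFA α σ) (w : List α) (hw : 0 < w.length) :
    DFA α (Fin w.length ⊕ σ) where
  step s a := match s with
    | .inl i => if h : i.val + 1 < w.length then .inl ⟨i.val + 1, h⟩ else .inr (M.eval w)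
    | .inr q => .inr (M.step q a)
  start := .inl ⟨0, hw⟩
  accept := Sum.inr '' M.accept

theorem eq_of_length_eq {α : Type} [Subsingleton α] {x y : List α} (h : x.length = y.length) :
    x = y :=
  List.ext_getElem h fun _ _ _ => Subsingleton.elim _ _

theorem delayed_eval {α σ : Type} [Subsingleton α] (M : DFA α σ) (w : List α)
    (hw : 0 < w.length) (x : List α) :
    (delayed M w hw).eval x =
      if h : x.length < w.length then .inl ⟨x.length, h⟩ else .inr (M.eval x) := by
  induction x using List.reverseRecOn with
  | nil => simp [hw, delayed]
  | append_singleton x a ih =>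
    rw [DFA.eval_append_singleton, ih]
    by_cases h : x.length < w.length
    · by_cases h' : x.length + 1 < w.length
      · simp [h, h', delayed]
      · have e : w = x ++ [a] := eq_of_length_eq (by simp; omega)
        have e' : M.eval w = M.step (M.eval x) a := by rw [e, DFA.eval_append_singleton]
        simp [h, h', delayed, e']
    · have h' : ¬ x.length + 1 < w.length := by omega
      simp [h, h', delayed]

theorem mem_singleton_mul_top {α : Type} [Subsingleton α] (w x : List α) :
    x ∈ ({w} : Language α) * (⊤ : Language α) ↔ w.length ≤ x.length := by
  rw [Language.mem_mul]
  constructor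
  · rintro ⟨a, rfl, b, -, rfl⟩
    simp
  · intro h
    exact ⟨w, rfl, x.drop w.length, trivial, eq_of_length_eq (by simp; omega)⟩

/-- Over a unary alphabet, if `w` is a nonempty word and `T` is accepted by an
`n`-state DFA, then `({w}·Σ*) ∩ T` is accepted by some DFA with `|w| + n` states. -/
theorem single_prefix_unary_upper {α : Type} [Fintype α] (hα : Fintype.card α = 1)
    (w : List α) (hw : w ≠ []) (n : ℕ) (hn : 2 ≤ n)
    (T : Language α) (hT : AcceptedByDFAWith T n) :
    AcceptedByDFAWith ((({w} : Language α) * (⊤ : Language α)) ⊓ T) (w.length + n) := by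
  have : Subsingleton α := Fintype.card_le_one_iff_subsingleton.mp hα.le
  obtain ⟨M, rfl⟩ := hT
  have hw' : 0 < w.length := List.length_pos_iff.mpr hw
  refine ⟨DFA.reindex finSumFinEquiv (delayed M w hw'), ?_⟩
  rw [DFA.accepts_reindex]
  ext x
  change _ ↔ x ∈ ({w} : Language α) * (⊤ : Language α) ∧ x ∈ M.accepts
  rw [mem_singleton_mul_top, DFA.mem_accepts, DFA.mem_accepts, delayed_eval]
  by_cases h : x.length < w.length
  · simp [h, delayed]
  · simp [h, delayed, not_lt.mp h]
end

section
/- For all m ≥ 3 and n ≥ 2, there exist a word w of length m−2 over the one-letter (unary) alphabet Σ = {a} and a language T over Σ accepted by a DFA with n states, such that every DFA accepting ({w}·Σ*) ∩ T has at least m + n − 2 states. -/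
/-!
The witness is `w = a^(m-2)` with `T = {a^k | k ≡ m - 3 (mod n)}`, which a cycle of `n` states
accepts. The intersection is `L = {a^k | k ≥ m - 2, k ≡ m - 3 (mod n)}`, and the words `a^i` with
`i < m + n - 2` are pairwise inequivalent for `L`. Indeed, words equivalent for `L` have lengths
congruent mod `n`. If moreover `i < j < m + n - 2`, then `i + n ≤ j` and hence `i ≤ m - 3`;
appending `a^(m-3-i)` takes `a^i` to `a^(m-3)`, just too short to be in `L`, but takes `a^j` into
`L`. The residue `m - 3` is chosen for the sake of this last step.
-/

open Language

/-- The unary words whose length is congruent to `r` modulo `n`. -/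
def modLang (n r : ℕ) : Language Unit := {x | x.length % n = r % n}

theorem modLang_accepted (n r : ℕ) (hn : 0 < n) : AcceptedByDFAWith (modLang n r) n := by
  let M : DFA Unit (Fin n) :=
    { step := fun s _ => ⟨(s.val + 1) % n, Nat.mod_lt _ hn⟩
      start := ⟨0, hn⟩
      accept := {s | s.val = r % n} }
  have key : ∀ x : List Unit, (M.eval x).val = x.length % n := by
    intro x
    induction x using List.reverseRecOn with
    | nil => simp [M]
    | append_singleton xs a ih =>
      rw [DFA.eval_append_singleton]
      change ((M.eval xs).val + 1) % n = _
      rw [ih]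
      simp
  refine ⟨M, ?_⟩
  ext x
  change (M.eval x).val = r % n ↔ x.length % n = r % n
  rw [key]

theorem mem_prefix_iff (l : ℕ) (x : List Unit) :
    x ∈ (({List.replicate l ()} : Language Unit) * (⊤ : Language Unit)) ↔ l ≤ x.length := by
  rw [Language.mem_mul]
  constructor
  · rintro ⟨a, ha, b, -, rfl⟩
    obtain rfl : a = List.replicate l () := ha
    simp
  · intro h
    refine ⟨List.replicate l (), rfl, List.replicate (x.length - l) (), trivial, ?_⟩
    rw [← List.replicate_add, Nat.add_sub_cancel' h]
    exact (List.eq_replicate_iff.2 ⟨rfl, fun _ _ => rfl⟩).symm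

/-- Tightness of the `m + n - 2` bound for single-word prefix matching over a unary
alphabet, where the word has length `m - 2`. -/
theorem single_prefix_unary_lower (m n : ℕ) (hm : 3 ≤ m) (hn : 2 ≤ n) :
    ∃ w : List Unit, w.length = m - 2 ∧
      ∃ T : Language Unit, AcceptedByDFAWith T n ∧
        ∀ (σ : Type) [Fintype σ] (D : DFA Unit σ),
          D.accepts = (({w} : Language Unit) * (⊤ : Language Unit)) ⊓ T →
            m + n - 2 ≤ Fintype.card σ := by
  refine ⟨List.replicate (m - 2) (), by simp, modLang n (m - 3),
    modLang_accepted n (m - 3) (by omega), ?_⟩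
  intro σ _ D hD
  have hmem : ∀ k, D.eval (List.replicate k ()) ∈ D.accept ↔
      m - 2 ≤ k ∧ k ≡ m - 3 [MOD n] := by
    intro k
    rw [← DFA.mem_accepts, hD]
    change (_ ∈ (({List.replicate (m - 2) ()} : Language Unit) * (⊤ : Language Unit)) ∧
      (List.replicate k ()).length % n = (m - 3) % n) ↔ _
    rw [mem_prefix_iff, List.length_replicate]
    rfl
  have hne : ∀ i j, i < j → j < m + n - 2 →
      D.eval (List.replicate i ()) ≠ D.eval (List.replicate j ()) := by
    intro i j hij hj heq
    have hshift : ∀ k, (m - 2 ≤ i + k ∧ i + k ≡ m - 3 [MOD n]) ↔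
        (m - 2 ≤ j + k ∧ j + k ≡ m - 3 [MOD n]) := by
      intro k
      have hsplit : ∀ i, D.eval (List.replicate (i + k) ()) =
          D.evalFrom (D.eval (List.replicate i ())) (List.replicate k ()) := by
        intro i
        rw [List.replicate_add]
        exact D.evalFrom_of_append _ _ _
      rw [← hmem, ← hmem, hsplit, hsplit, heq]
    have hmod : i ≡ j [MOD n] := by
      -- A suffix completing `a^i` to length `m - 3 + n * (i + 1)`, which lies in `L`.
      have hle : i + 1 ≤ n * (i + 1) := Nat.le_mul_of_pos_left _ (by omega)
      have hk : i + (m - 3 + n * (i + 1) - i) = m - 3 + n * (i + 1) := by omega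
      have h1 : i + (m - 3 + n * (i + 1) - i) ≡ m - 3 [MOD n] := by
        rw [hk]; simp [Nat.ModEq]
      have h2 := ((hshift _).1 ⟨by omega, h1⟩).2
      exact Nat.ModEq.add_right_cancel' _ (h1.trans h2.symm)
    have hd : n ≤ j - i := Nat.le_of_dvd (by omega) ((Nat.modEq_iff_dvd' hij.le).1 hmod)
    have hk : i + (m - 3 - i) = m - 3 := by omega
    have h3 : j + (m - 3 - i) ≡ m - 3 [MOD n] := by
      have := (hmod.add_right (m - 3 - i)).symm
      rwa [hk] at this
    have h4 := ((hshift (m - 3 - i)).2 ⟨by omega, h3⟩).1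
    omega
  have hinj : Function.Injective
      (fun i : Fin (m + n - 2) => D.eval (List.replicate i.val ())) := by
    intro i j h
    rcases lt_trichotomy i.val j.val with hlt | he | hlt
    · exact absurd h (hne _ _ hlt j.isLt)
    · exact Fin.ext he
    · exact absurd h.symm (hne _ _ hlt i.isLt)
  simpa using Fintype.card_le_of_injective _ hinj
end

section
/- Let Σ be any alphabet, let w be a nonempty word over Σ, and let n ≥ 2. If T is a language over Σ accepted by some DFA with n states, then the language (Σ*·{w}) ∩ T (the words of T that end with w) is accepted by some DFA with (|w|+1)·n − |w| states. (With m = |w| + 2 the state complexity of {w}, this bound is (m−1)·n − (m−2).) -/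
/-!
The left quotient of `L = Σ*w ∩ T` by a word `u` is determined by the state `q` that a DFA `M`
for `T` reaches on `u`, together with the length `i ≤ |w|` of the longest prefix of `w` that is a
suffix of `u` (`exists_prefix_state`): it consists of the `x` with `w` a suffix of `w[..i] x` and
`M.evalFrom q x` accepting. This is the product of `M` with the Knuth–Morris–Pratt automaton and
leaves `(|w| + 1) n` candidates, of which `|w|` have to be saved.

If `w` sends every state of `M` to an accepting state, then `L = Σ*w` and the `|w| + 1` values of
`i` suffice, since `n ≥ 2`. Otherwise fix a state `q₀` that `w` sends to a rejecting state, and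
let `qᵢ` be the state reached from `q₀` on `w[..i]`. For `i ≥ 1` replace the prefix `w[..i]` by
its longest proper border `w[..j]`: the only word `x` for which this affects whether `w` is a
suffix of `w[..i] x` is the remainder of `w`, and that word is rejected from `qᵢ` anyway. Hence the
pairs `(qᵢ, i)` and `(qᵢ, j)` give the same quotient, and the pairs `(qᵢ, i)`, one for each
`1 ≤ i ≤ |w|`, are redundant.
-/

open Language

/-- A DFA with a finite type of states may be padded with useless states: the extra elements of
`Fin k` behave like arbitrarily chosen states of `M`. -/
lemma acceptedByDFAWith_of_card_le {α σ : Type} [Fintype σ] (M : DFA α σ) {k : ℕ}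
    (hk : Fintype.card σ ≤ k) : AcceptedByDFAWith M.accepts k := by
  obtain ⟨f⟩ : Nonempty (σ ↪ Fin k) :=
    Function.Embedding.nonempty_of_card_le (by simpa using hk)
  have : Nonempty σ := ⟨M.start⟩
  let g : Fin k → σ := Function.invFun f
  have hg : ∀ s, g (f s) = s := Function.leftInverse_invFun f.injective
  let N : DFA α (Fin k) := ⟨fun s a => f (M.step (g s) a), f M.start, {s | g s ∈ M.accept}⟩
  have key : ∀ (x : List α) (s : σ), N.evalFrom (f s) x = f (M.evalFrom s x) := by
    intro x
    induction x with
    | nil => intro s; rfl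
    | cons a x ih =>
      intro s
      have h : N.step (f s) a = f (M.step s a) := by simp [N, hg]
      rw [DFA.evalFrom_cons, DFA.evalFrom_cons, h, ih]
  refine ⟨N, ?_⟩
  ext x
  change g (N.evalFrom (f M.start) x) ∈ M.accept ↔ M.evalFrom M.start x ∈ M.accept
  rw [key, hg]

/-- The easy half of the Myhill–Nerode theorem, with a count: the left quotients of `L` are the
states of a DFA accepting `L`. -/
lemma acceptedByDFAWith_of_leftQuotient {α β : Type} (L : Language α) (S : Finset β)
    (G : β → Language α) (hG : ∀ u, ∃ s ∈ S, L.leftQuotient u = G s) {k : ℕ}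
    (hk : S.card ≤ k) : AcceptedByDFAWith L k := by
  classical
  have hsub : Set.range L.leftQuotient ⊆ (S.image G : Set (Language α)) := by
    rintro _ ⟨u, rfl⟩
    obtain ⟨s, hs, h⟩ := hG u
    simp only [Finset.coe_image, Set.mem_image, Finset.mem_coe]
    exact ⟨s, hs, h.symm⟩
  have hfin : (Set.range L.leftQuotient).Finite := (Finset.finite_toSet _).subset hsub
  let _ : Fintype (Set.range L.leftQuotient) := hfin.fintype
  have hcard : Fintype.card (Set.range L.leftQuotient) ≤ k := by
    rw [← Nat.card_eq_fintype_card, Nat.card_coe_set_eq]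
    calc _ ≤ ((S.image G : Finset _) : Set (Language α)).ncard :=
          Set.ncard_le_ncard hsub (Finset.finite_toSet _)
      _ = (S.image G).card := Set.ncard_coe_finset _
      _ ≤ S.card := Finset.card_image_le
      _ ≤ k := hk
  simpa using acceptedByDFAWith_of_card_le L.toDFA hcard

/-- An occurrence of `w` at the end of `u x` either lies inside `x` or starts inside `u`. -/
lemma suffix_append_iff_exists_take {α : Type} (w u x : List α) :
    w <:+ u ++ x ↔ w <:+ x ∨ ∃ k ≤ w.length, w.take k <:+ u ∧ x = w.drop k := by
  constructor
  · rintro ⟨t, ht⟩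
    rcases List.append_eq_append_iff.1 ht with ⟨a, hu, hw⟩ | ⟨c, ht, hx⟩
    · refine Or.inr ⟨a.length, by simp [hw], ?_, by simp [hw]⟩
      rw [hw, List.take_left]
      exact ⟨t, hu.symm⟩
    · exact Or.inl ⟨c, hx.symm⟩
  · rintro (h | ⟨k, -, ⟨t, ht⟩, rfl⟩)
    · exact h.trans (List.suffix_append _ _)
    · exact ⟨t, by rw [← ht, List.append_assoc, List.take_append_drop]⟩

/-- Replacing `u` by the longest prefix of `w` of length less than `N` that is a suffix of `u` only
affects the continuations `x` completing a prefix of `w` of length at least `N`. The bound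
`N = |w| + 1` gives the Knuth–Morris–Pratt state of `u`, and `u = w[..N]` gives the longest proper
border of `w[..N]`. -/
lemma exists_border {α : Type} (w u : List α) (N : ℕ) (hN : 0 < N) :
    ∃ j < N, ∀ x, (∀ k, N ≤ k → k ≤ w.length → w.take k <:+ u → x ≠ w.drop k) →
      (w <:+ u ++ x ↔ w <:+ w.take j ++ x) := by
  classical
  let P : ℕ → Prop := fun k => w.take k <:+ u
  have hP : P (Nat.findGreatest P (N - 1)) :=
    Nat.findGreatest_spec (P := P) (Nat.zero_le _) (by simp [P])
  have hle : Nat.findGreatest P (N - 1) ≤ N - 1 := Nat.findGreatest_le _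
  refine ⟨Nat.findGreatest P (N - 1), by omega, fun x hx => ?_⟩
  rw [suffix_append_iff_exists_take, suffix_append_iff_exists_take]
  refine or_congr_right (exists_congr fun k => and_congr_right fun hk => and_congr_left fun hxk =>
    ⟨fun h => ?_, fun h => h.trans hP⟩)
  have hkN : k ≤ N - 1 := by
    by_contra hcon
    exact hx k (by omega) hk h hxk
  have hkj : k ≤ Nat.findGreatest P (N - 1) := Nat.le_findGreatest hkN h
  refine List.suffix_of_suffix_length_le h hP ?_
  simp only [List.length_take]
  omega

lemma exists_prefix_state {α : Type} (w u : List α) :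
    ∃ i < w.length + 1, ∀ x, w <:+ u ++ x ↔ w <:+ w.take i ++ x := by
  obtain ⟨i, hi, h⟩ := exists_border w u (w.length + 1) (by omega)
  exact ⟨i, hi, fun x => h x fun k h1 h2 => by omega⟩

lemma mem_top_mul_singleton {α : Type} (w x : List α) :
    x ∈ (⊤ : Language α) * ({w} : Language α) ↔ w <:+ x := by
  rw [Language.mem_mul]
  constructor
  · rintro ⟨a, -, b, rfl, h⟩
    exact ⟨a, h⟩
  · rintro ⟨a, h⟩
    exact ⟨a, trivial, w, rfl, h⟩

/-- If `w` is a nonempty word and `T` is accepted by an `n`-state DFA, then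
`(Σ*·{w}) ∩ T` is accepted by some DFA with `(|w|+1)·n - |w|` states. -/
theorem single_suffix_upper {α : Type} (w : List α) (hw : w ≠ []) (n : ℕ) (hn : 2 ≤ n)
    (T : Language α) (hT : AcceptedByDFAWith T n) :
    AcceptedByDFAWith (((⊤ : Language α) * ({w} : Language α)) ⊓ T)
      ((w.length + 1) * n - w.length) := by
  classical
  obtain ⟨M, rfl⟩ := hT
  have hmem : ∀ u x, x ∈ (((⊤ : Language α) * ({w} : Language α)) ⊓ M.accepts).leftQuotient u ↔
      w <:+ u ++ x ∧ M.evalFrom (M.eval u) x ∈ M.accept := by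
    intro u x
    rw [← mem_top_mul_singleton, DFA.eval, ← DFA.evalFrom_of_append]
    rfl
  by_cases hall : ∀ q, M.evalFrom q w ∈ M.accept
  · refine acceptedByDFAWith_of_leftQuotient _ (Finset.range (w.length + 1))
      (fun i => {x | w <:+ w.take i ++ x}) (fun u => ?_) ?_
    · obtain ⟨i, hi, h⟩ := exists_prefix_state w u
      refine ⟨i, Finset.mem_range.2 hi, ?_⟩
      ext x
      rw [hmem]
      change _ ↔ w <:+ w.take i ++ x
      rw [← h x]
      refine and_iff_left_of_imp ?_
      rintro ⟨t, ht⟩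
      rw [DFA.eval, ← DFA.evalFrom_of_append, ← ht, DFA.evalFrom_of_append]
      exact hall _
    · have : (w.length + 1) * 2 ≤ (w.length + 1) * n := Nat.mul_le_mul_left _ hn
      rw [Finset.card_range]
      omega
  · push Not at hall
    obtain ⟨q₀, hq₀⟩ := hall
    let G : Fin n × Fin (w.length + 1) → Language α := fun p =>
      {x | w <:+ w.take p.2 ++ x ∧ M.evalFrom p.1 x ∈ M.accept}
    let r : Fin w.length → Fin n × Fin (w.length + 1) := fun i =>
      (M.evalFrom q₀ (w.take (i + 1)), i.succ)
    have hr : Function.Injective r := fun i j h => Fin.succ_injective _ (Prod.ext_iff.1 h).2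
    have hred : ∀ (i : ℕ) (hi : i < w.length + 1) (q : Fin n),
        ∃ s ∈ (Finset.univ.image r)ᶜ, G (q, ⟨i, hi⟩) = G s := by
      intro i
      induction i using Nat.strong_induction_on with
      | _ i ih =>
        intro hi q
        by_cases hq : (q, (⟨i, hi⟩ : Fin (w.length + 1))) ∈ Finset.univ.image r
        · obtain ⟨k, -, hk⟩ := Finset.mem_image.1 hq
          obtain ⟨hkq, hki⟩ := Prod.ext_iff.1 hk
          have hik : (k : ℕ) + 1 = i := congrArg Fin.val hki
          change M.evalFrom q₀ (w.take (k + 1)) = q at hkq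
          rw [hik] at hkq
          obtain ⟨j, hji, hj⟩ := exists_border w (w.take i) i (by omega)
          obtain ⟨s, hs, hGs⟩ := ih j hji (by omega) q
          refine ⟨s, hs, ?_⟩
          rw [← hGs]
          ext x
          change (w <:+ w.take i ++ x ∧ M.evalFrom q x ∈ M.accept) ↔
            (w <:+ w.take j ++ x ∧ M.evalFrom q x ∈ M.accept)
          refine and_congr_left fun hx => hj x fun m him hm hsuf hxm => ?_
          -- The prefix of length `m ≥ i` is a suffix of the one of length `i`, so `m = i`, and
          -- then `x` leads from `q` to the rejecting state reached from `q₀` on `w`.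
          have hlen := hsuf.length_le
          simp only [List.length_take] at hlen
          obtain rfl : m = i := by omega
          rw [← hkq, ← DFA.evalFrom_of_append, hxm, List.take_append_drop] at hx
          exact hq₀ hx
        · exact ⟨_, Finset.mem_compl.2 hq, rfl⟩
    refine acceptedByDFAWith_of_leftQuotient _ (Finset.univ.image r)ᶜ G (fun u => ?_) ?_
    · obtain ⟨i, hi, h⟩ := exists_prefix_state w u
      obtain ⟨s, hs, hGs⟩ := hred i hi (M.eval u)
      refine ⟨s, hs, ?_⟩
      rw [← hGs]
      ext x
      rw [hmem, h x]
      rfl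
    · rw [Finset.card_compl, Finset.card_image_of_injective _ hr]
      simp [mul_comm]
end

section
/- For all m ≥ 3 and n ≥ 2, there exist a word w of length m−2 over the two-letter alphabet Σ = {a, b} and a language T over Σ accepted by a DFA with n states, such that every DFA accepting (Σ*·{w}) ∩ T has at least (m−1)·n − (m−2) states. -/
/-!
Write `a = 0`, `b = 1`, `k = m - 2`. The witnesses are `w = a ^ k` and `T`, the language of all words
with fewer than `n - 1` letters `b`; an `n`-state automaton for `T` counts the letters `b`, saturating
at the dead state `n - 1`.

The `(k + 1) * (n - 1) + 1` words `b ^ q a ^ i` (`i ≤ k`, `q < n - 1`) and `b ^ (n - 1)` are pairwise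
inequivalent for the Myhill-Nerode relation of `Σ* w ∩ T`, so they lead to distinct states of any
automaton for it:
* for different numbers `q < q'` of letters `b`, the continuation `b ^ (n - 1 - q') a ^ k` uses up the
  allowance of the second word but not of the first (`eval_ne_of_lt_b`);
* for equal `q < n - 1` and `i < j`, the continuation `a ^ (k - j)` completes the suffix `a ^ k` after
  the second word, whereas the first one is left with fewer than `k` letters `a` (`eval_ne_of_lt_a`).
-/

open Language

/-- The automaton counting the letters `1`, saturating at `n - 1`, the only rejecting state. -/
def counter (n : ℕ) (hn : 2 ≤ n) : DFA (Fin 2) (Fin n) where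
  step q c := if c = 0 then q else ⟨min (q + 1) (n - 1), by omega⟩
  start := ⟨0, by omega⟩
  accept := {q | q.val < n - 1}

theorem counter_eval (n : ℕ) (hn : 2 ≤ n) (x : List (Fin 2)) :
    ((counter n hn).eval x).val = min (x.count 1) (n - 1) := by
  induction x using List.reverseRecOn with
  | nil => simp [counter]
  | append_singleton x c ih =>
    rw [DFA.eval_append_singleton, List.count_append]
    by_cases hc : c = 0
    · subst hc
      simpa [counter] using ih
    · obtain rfl : c = 1 := by omega
      have : ((counter n hn).step ((counter n hn).eval x) 1).val
          = min (((counter n hn).eval x).val + 1) (n - 1) := rfl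
      rw [this, ih]
      simp
      omega

theorem mem_counter (n : ℕ) (hn : 2 ≤ n) (x : List (Fin 2)) :
    x ∈ (counter n hn).accepts ↔ x.count 1 < n - 1 := by
  have h : x ∈ (counter n hn).accepts ↔ ((counter n hn).eval x).val < n - 1 := Iff.rfl
  rw [h, counter_eval]
  omega

theorem mem_target (k n : ℕ) (hn : 2 ≤ n) (x : List (Fin 2)) :
    x ∈ ((⊤ : Language (Fin 2)) * ({List.replicate k 0} : Language (Fin 2))) ⊓
        (counter n hn).accepts ↔
      (∃ u, u ++ List.replicate k 0 = x) ∧ x.count 1 < n - 1 := by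
  rw [← mem_counter n hn x]
  have h : x ∈ (⊤ : Language (Fin 2)) * ({List.replicate k 0} : Language (Fin 2)) ↔
      ∃ u, u ++ List.replicate k 0 = x := by
    rw [Language.mem_mul]
    constructor
    · rintro ⟨u, -, v, rfl, h⟩
      exact ⟨u, h⟩
    · rintro ⟨u, h⟩
      exact ⟨u, trivial, _, rfl, h⟩
  exact and_congr_left fun _ => h

/-- The word `b ^ q a ^ i`. -/
def bword (q i : ℕ) : List (Fin 2) := List.replicate q 1 ++ List.replicate i 0

section

variable {σ : Type} {D : DFA (Fin 2) σ} {k n : ℕ}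

/-- Words leading to the same state have the same accepted continuations. -/
theorem accepts_congr {x y : List (Fin 2)} (h : D.eval x = D.eval y) (z : List (Fin 2)) :
    x ++ z ∈ D.accepts ↔ y ++ z ∈ D.accepts := by
  have h' : D.evalFrom D.start x = D.evalFrom D.start y := h
  rw [DFA.mem_accepts, DFA.mem_accepts, DFA.eval, DFA.evalFrom_of_append,
    DFA.evalFrom_of_append, h']

theorem eval_ne_of_lt_b
    (hD : ∀ x, x ∈ D.accepts ↔ (∃ u, u ++ List.replicate k 0 = x) ∧ x.count 1 < n - 1)
    {q q' i j : ℕ} (hq : q < q') (hq' : q' ≤ n - 1) :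
    D.eval (bword q i) ≠ D.eval (bword q' j) := by
  intro h
  have key := accepts_congr h (bword (n - 1 - q') k)
  rw [hD, hD] at key
  have h2 := (key.1 ⟨⟨bword q i ++ List.replicate (n - 1 - q') 1, by simp [bword]⟩, by
    simp [bword, List.count_replicate]; omega⟩).2
  simp [bword, List.count_replicate] at h2
  omega

theorem eval_ne_of_lt_a
    (hD : ∀ x, x ∈ D.accepts ↔ (∃ u, u ++ List.replicate k 0 = x) ∧ x.count 1 < n - 1)
    {q i j : ℕ} (hij : i < j) (hj : j ≤ k) (hq : q < n - 1) :
    D.eval (bword q i) ≠ D.eval (bword q j) := by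
  intro h
  have key := accepts_congr h (List.replicate (k - j) 0)
  rw [hD, hD] at key
  obtain ⟨u, hu⟩ := (key.2 ⟨⟨List.replicate q 1, by
    simp only [bword, List.append_assoc, List.replicate_append_replicate]
    congr 2; omega⟩, by
    simp [bword, List.count_replicate]; omega⟩).1
  -- The word has only `i + (k - j) < k` letters `0`.
  have hc := congrArg (List.count 0) hu
  simp [bword, List.count_replicate] at hc
  omega

end

/-- Tightness of the `(m-1)·n - (m-2)` bound for single-word suffix matching over a
binary alphabet, where the word has length `m - 2`. -/
theorem single_suffix_lower (m n : ℕ) (hm : 3 ≤ m) (hn : 2 ≤ n) :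
    ∃ w : List (Fin 2), w.length = m - 2 ∧
      ∃ T : Language (Fin 2), AcceptedByDFAWith T n ∧
        ∀ (σ : Type) [Fintype σ] (D : DFA (Fin 2) σ),
          D.accepts = ((⊤ : Language (Fin 2)) * ({w} : Language (Fin 2))) ⊓ T →
            (m - 1) * n - (m - 2) ≤ Fintype.card σ := by
  obtain ⟨k, rfl⟩ : ∃ k, m = k + 2 := ⟨m - 2, by omega⟩
  refine ⟨List.replicate k 0, by simp, (counter n hn).accepts, ⟨_, rfl⟩, ?_⟩
  intro σ _ D hacc
  have hD : ∀ x, x ∈ D.accepts ↔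
      (∃ u, u ++ List.replicate k 0 = x) ∧ x.count 1 < n - 1 := fun x => by
    rw [hacc]; exact mem_target k n hn x
  let f : Option (Fin (k + 1) × Fin (n - 1)) → σ := fun o =>
    o.elim (D.eval (bword (n - 1) 0)) fun p => D.eval (bword p.2 p.1)
  have hf : Function.Injective f := by
    rintro (_ | ⟨i, q⟩) (_ | ⟨j, q'⟩) h
    · rfl
    · exact absurd h.symm (eval_ne_of_lt_b hD q'.2 le_rfl)
    · exact absurd h (eval_ne_of_lt_b hD q.2 le_rfl)
    · have h' : D.eval (bword q i) = D.eval (bword q' j) := h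
      rcases lt_trichotomy q q' with hq | rfl | hq
      · exact absurd h' (eval_ne_of_lt_b hD hq q'.2.le)
      · rcases lt_trichotomy i j with hi | rfl | hi
        · exact absurd h' (eval_ne_of_lt_a hD hi (by omega) q.2)
        · rfl
        · exact absurd h'.symm (eval_ne_of_lt_a hD hi (by omega) q.2)
      · exact absurd h'.symm (eval_ne_of_lt_b hD hq q.2.le)
  have hcard := Fintype.card_le_of_injective f hf
  obtain ⟨l, rfl⟩ : ∃ l, n = l + 1 := ⟨n - 1, by omega⟩
  simp only [Fintype.card_option, Fintype.card_prod, Fintype.card_fin,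
    Nat.add_sub_cancel] at hcard
  have e : (k + 2 - 1) * (l + 1) = (k + 1) * l + (k + 1) := by
    rw [show k + 2 - 1 = k + 1 by omega]; ring
  omega
end

section
/- Let Σ be any alphabet and let w be a nonempty word over Σ. Then the two-sided ideal Σ*·{w}·Σ* (the set of all words containing w as a factor) is accepted by some DFA with |w| + 1 states, and every DFA accepting Σ*·{w}·Σ* has at least |w| + 1 states. (With m = |w| + 2 the state complexity of {w}, the state complexity of Σ*·{w}·Σ* is exactly m − 1.) -/
/-!
The ideal `Σ*·{w}·Σ*` consists of the words having `w` as an infix (`mem_factorIdeal`).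

Upper bound: the Knuth–Morris–Pratt automaton. After reading `x`, its state is the length of the
longest prefix of `w` that is a suffix of `x`, except that the state `|w|` is made absorbing. The
update is well defined because the longest border of `x ++ [a]` depends only on `a` and the longest
border of `x` (`longestBorder_append_singleton`).

Lower bound: the `|w| + 1` prefixes of `w` are pairwise Myhill–Nerode inequivalent. If `i < j ≤ |w|`,
appending `w.drop j` turns the prefix of length `j` into `w`, but turns the prefix of length `i`
into a word shorter than `w`, which cannot contain `w`.
-/

open Language

theorem mem_factorIdeal {α : Type} (w x : List α) :
    x ∈ (⊤ : Language α) * ({w} : Language α) * (⊤ : Language α) ↔ w <:+: x := by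
  simp only [Language.mem_mul]
  constructor
  · rintro ⟨_, ⟨s, -, _, rfl, rfl⟩, t, -, rfl⟩
    exact ⟨s, t, rfl⟩
  · rintro ⟨s, t, rfl⟩
    exact ⟨s ++ w, ⟨s, trivial, w, rfl, rfl⟩, t, trivial, rfl⟩

open Classical in
/-- The length of the longest prefix of `w` that is a suffix of `x`. -/
noncomputable def longestBorder {α : Type} (w x : List α) : ℕ :=
  Nat.findGreatest (fun j => w.take j <:+ x) w.length

theorem longestBorder_le {α : Type} (w x : List α) : longestBorder w x ≤ w.length := by
  classical
  exact Nat.findGreatest_le _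

theorem take_longestBorder_suffix {α : Type} (w x : List α) :
    w.take (longestBorder w x) <:+ x := by
  classical
  exact Nat.findGreatest_spec (P := fun j => w.take j <:+ x) (Nat.zero_le w.length) (by simp)

theorem le_longestBorder {α : Type} {w x : List α} {j : ℕ} (hj : j ≤ w.length)
    (h : w.take j <:+ x) : j ≤ longestBorder w x := by
  classical
  exact Nat.le_findGreatest hj h

theorem longestBorder_eq_length_iff {α : Type} (w x : List α) :
    longestBorder w x = w.length ↔ w <:+ x := by
  constructor
  · intro h
    simpa [h] using take_longestBorder_suffix w x
  · intro h
    exact le_antisymm (longestBorder_le w x) (le_longestBorder le_rfl (by simpa using h))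

/-- The longest border of `x ++ [a]` is determined by `a` and the longest border of `x`: a nonempty
prefix of `w` ending `x ++ [a]` is a prefix of `w` ending `x`, hence ending the longest border of
`x`, followed by `a`. -/
theorem longestBorder_append_singleton {α : Type} (w x : List α) (a : α) :
    longestBorder w (w.take (longestBorder w x) ++ [a]) = longestBorder w (x ++ [a]) := by
  apply le_antisymm
  · refine le_longestBorder (longestBorder_le _ _) ((take_longestBorder_suffix _ _).trans ?_)
    obtain ⟨s, hs⟩ := take_longestBorder_suffix w x
    exact ⟨s, by rw [← List.append_assoc, hs]⟩
  · refine le_longestBorder (longestBorder_le _ _) ?_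
    have hle := longestBorder_le w (x ++ [a])
    have hsuf := take_longestBorder_suffix w (x ++ [a])
    generalize longestBorder w (x ++ [a]) = j at hle hsuf
    cases j with
    | zero => simp
    | succ i =>
      rw [List.take_succ_eq_append_getElem (by omega)] at hsuf ⊢
      obtain ⟨s, hs⟩ := hsuf
      rw [← List.append_assoc] at hs
      obtain ⟨hx, ha⟩ := List.append_inj' hs rfl
      have hi : w.take i <:+ x := ⟨s, hx⟩
      have hik : i ≤ longestBorder w x := le_longestBorder (by omega) hi
      obtain ⟨t, ht⟩ := List.suffix_of_suffix_length_le hi (take_longestBorder_suffix w x)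
        (by simp only [List.length_take]; omega)
      exact ⟨t, by rw [← List.append_assoc, ht, ha]⟩

open Classical in
/-- The Knuth–Morris–Pratt automaton of `w`: state `k` stands for the border `w.take k`, and the
final state `w.length` is absorbing. -/
noncomputable def kmpDFA {α : Type} (w : List α) : DFA α (Fin (w.length + 1)) where
  step k a := if k = Fin.last _ then k else
    ⟨longestBorder w (w.take k ++ [a]), Nat.lt_succ_of_le (longestBorder_le _ _)⟩
  start := ⟨longestBorder w [], Nat.lt_succ_of_le (longestBorder_le _ _)⟩
  accept := {Fin.last _}

open Classical in
theorem kmpDFA_eval {α : Type} (w : List α) (x : List α) :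
    ((kmpDFA w).eval x : ℕ) = if w <:+: x then w.length else longestBorder w x := by
  induction x using List.reverseRecOn with
  | nil =>
    split_ifs with h
    · rw [List.infix_nil] at h
      subst h
      exact (longestBorder_eq_length_iff _ _).2 List.suffix_rfl
    · rfl
  | append_singleton x a ih =>
    rw [DFA.eval_append_singleton]
    by_cases hx : w <:+: x
    · rw [if_pos hx] at ih
      have hlast : (kmpDFA w).eval x = Fin.last _ := Fin.ext ih
      rw [if_pos (List.infix_concat_iff.2 (Or.inr hx)), hlast]
      simp [kmpDFA]
    · rw [if_neg hx] at ih
      have hne : (kmpDFA w).eval x ≠ Fin.last _ := by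
        intro h
        rw [h, Fin.val_last] at ih
        exact hx ((longestBorder_eq_length_iff w x).1 ih.symm).isInfix
      have hstep : ((kmpDFA w).step ((kmpDFA w).eval x) a : ℕ)
          = longestBorder w (w.take ((kmpDFA w).eval x) ++ [a]) :=
        congrArg Fin.val (if_neg hne)
      rw [hstep, ih, longestBorder_append_singleton]
      split_ifs with h
      · exact (longestBorder_eq_length_iff _ _).2
          ((List.infix_concat_iff.1 h).resolve_right hx)
      · rfl

theorem kmpDFA_accepts {α : Type} (w : List α) :
    (kmpDFA w).accepts = (⊤ : Language α) * ({w} : Language α) * (⊤ : Language α) := by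
  classical
  ext x
  rw [mem_factorIdeal, DFA.mem_accepts]
  change (kmpDFA w).eval x = Fin.last _ ↔ _
  rw [Fin.ext_iff, kmpDFA_eval, Fin.val_last]
  split_ifs with h
  · simp [h]
  · rw [longestBorder_eq_length_iff]
    exact ⟨List.IsSuffix.isInfix, fun h' => absurd h' h⟩

/-- Distinct prefixes of `w` lead to distinct states, being separated by the suffix of `w` that
completes the longer one. -/
theorem eval_take_ne {α σ : Type} {w : List α} {D : DFA α σ}
    (hD : D.accepts = (⊤ : Language α) * ({w} : Language α) * (⊤ : Language α))
    {i j : ℕ} (hij : i < j) (hj : j ≤ w.length) : D.eval (w.take i) ≠ D.eval (w.take j) := by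
  intro h
  have hmem : w.take i ++ w.drop j ∈ D.accepts ↔ w.take j ++ w.drop j ∈ D.accepts := by
    simp only [DFA.mem_accepts, DFA.eval, DFA.evalFrom_of_append] at h ⊢
    rw [h]
  rw [hD, mem_factorIdeal, mem_factorIdeal, List.take_append_drop] at hmem
  have hlen := (hmem.2 List.infix_rfl).length_le
  simp only [List.length_append, List.length_take, List.length_drop] at hlen
  omega

/-- For a nonempty word `w`, the two-sided ideal `Σ*·{w}·Σ*` has state complexity
exactly `|w| + 1`. -/
theorem single_factor_ideal_complexity {α : Type} (w : List α) (hw : w ≠ []) :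
    AcceptedByDFAWith ((⊤ : Language α) * ({w} : Language α) * (⊤ : Language α))
      (w.length + 1) ∧
    ∀ (σ : Type) [Fintype σ] (D : DFA α σ),
      D.accepts = (⊤ : Language α) * ({w} : Language α) * (⊤ : Language α) →
        w.length + 1 ≤ Fintype.card σ := by
  refine ⟨⟨kmpDFA w, kmpDFA_accepts w⟩, fun σ _ D hD => ?_⟩
  have hinj : Function.Injective fun i : Fin (w.length + 1) => D.eval (w.take i) := by
    intro i j h
    rcases lt_trichotomy i j with hij | hij | hij
    · exact absurd h (eval_take_ne hD hij (Nat.le_of_lt_succ j.2))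
    · exact hij
    · exact absurd h.symm (eval_take_ne hD hij (Nat.le_of_lt_succ i.2))
  simpa using Fintype.card_le_of_injective _ hinj
end

section
/- Let Σ be any alphabet and let w be a nonempty word over Σ. Then the all-sided ideal Σ* ⧢ {w} = {x | w is a subsequence of x} is accepted by some DFA with |w| + 1 states, and every DFA accepting it has at least |w| + 1 states. (With m = |w| + 2 the state complexity of {w}, the state complexity of Σ* ⧢ {w} is exactly m − 1.) -/
/-!
Upper bound: reading a word from left to right, greedily match the letters of `w`; the state is the
length `i` of the prefix of `w` matched so far. A word `x` read from state `i` leads to the final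
state `|w|` exactly when the remaining suffix `w.drop i` is a subsequence of `x`
(`greedyDFA_evalFrom_eq_last`).

Lower bound: in any DFA accepting the ideal, the `|w| + 1` prefixes of `w` lead to distinct states
(`take_states_ne`).
If the prefixes of lengths `i < j` led to the same state, then `w.take i ++ w.drop j` would be
accepted just as `w` is; but it is shorter than `w`, so `w` is not a subsequence of it.
-/

open Language

open Classical in
/-- The greedy matching automaton of `w`: state `i` means that exactly the first `i` letters of `w`
have been matched. In the last state `w[i]?` is `none`, so that this state is a sink. -/
noncomputable def greedyDFA {α : Type} (w : List α) : DFA α (Fin (w.length + 1)) where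
  step i a := if h : w[i.val]? = some a then
      ⟨i.val + 1, Nat.succ_lt_succ (List.getElem?_eq_some_iff.mp h).1⟩ else i
  start := 0
  accept := {Fin.last w.length}

theorem greedyDFA_evalFrom_eq_last {α : Type} (w x : List α) (i : Fin (w.length + 1)) :
    (greedyDFA w).evalFrom i x = Fin.last w.length ↔ (w.drop i.val).Sublist x := by
  induction x generalizing i with
  | nil =>
    rw [DFA.evalFrom_nil, List.sublist_nil, List.drop_eq_nil_iff, Fin.ext_iff, Fin.val_last]
    have := i.isLt
    omega
  | cons a x ih =>
    rw [DFA.evalFrom_cons, ih]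
    by_cases hi : i.val < w.length
    · rw [List.drop_eq_getElem_cons hi]
      by_cases h : w[i.val] = a
      · have h' : w[i.val]? = some a := List.getElem?_eq_some_iff.mpr ⟨hi, h⟩
        simp only [greedyDFA, h', dite_true, h, List.cons_sublist_cons]
      · have h' : ¬ w[i.val]? = some a := fun e => h (List.getElem?_eq_some_iff.mp e).2
        simp only [greedyDFA, h', dite_false, List.drop_eq_getElem_cons hi]
        refine ⟨fun s => s.cons a, fun s => ?_⟩
        cases s with
        | cons _ s => exact s
        | cons_cons _ s => exact absurd rfl h
    · have hw : w.length ≤ i.val := not_lt.mp hi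
      have h' : ¬ w[i.val]? = some a := by simp [List.getElem?_eq_none hw]
      simp only [greedyDFA, h', dite_false, List.drop_eq_nil_of_le hw, List.nil_sublist]

theorem take_states_ne {α σ : Type} (w : List α) (D : DFA α σ)
    (hD : D.accepts = ({x : List α | w.Sublist x} : Language α)) {i j : ℕ}
    (hij : i < j) (hj : j ≤ w.length) : D.eval (w.take i) ≠ D.eval (w.take j) := by
  intro h
  have hacc (x : List α) : D.eval x ∈ D.accept ↔ w.Sublist x := by
    rw [← DFA.mem_accepts, hD]; rfl
  have key : D.eval (w.take i ++ w.drop j) = D.eval w := by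
    conv_rhs => rw [← List.take_append_drop j w]
    unfold DFA.eval at h ⊢
    rw [DFA.evalFrom_of_append, DFA.evalFrom_of_append, h]
  have hs : w.Sublist (w.take i ++ w.drop j) := by
    rw [← hacc, key, hacc]
  have := hs.length_le
  rw [List.length_append, List.length_take, List.length_drop] at this
  omega

/-- For a nonempty word `w`, the all-sided ideal `Σ* ⧢ {w} = {x | w is a subsequence of x}`
has state complexity exactly `|w| + 1`. -/
theorem single_subsequence_ideal_complexity {α : Type} (w : List α) (hw : w ≠ []) :
    AcceptedByDFAWith ({x : List α | w.Sublist x} : Language α) (w.length + 1) ∧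
    ∀ (σ : Type) [Fintype σ] (D : DFA α σ),
      D.accepts = ({x : List α | w.Sublist x} : Language α) →
        w.length + 1 ≤ Fintype.card σ := by
  refine ⟨⟨greedyDFA w, ?_⟩, ?_⟩
  · ext x
    exact greedyDFA_evalFrom_eq_last w x 0
  · intro σ _ D hD
    have hinj : Function.Injective
        (fun i : Fin (w.length + 1) => D.eval (w.take i.val)) := by
      intro i j hij
      rcases lt_trichotomy i j with h | h | h
      · exact absurd hij (take_states_ne w D hD h (Nat.le_of_lt_succ j.isLt))
      · exact h
      · exact absurd hij.symm (take_states_ne w D hD h (Nat.le_of_lt_succ i.isLt))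
    simpa using Fintype.card_le_of_injective _ hinj
end
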